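/- Fix a positive integer k. The sum of the k-th powers of all cyclic numbers ≤ x is asymptotically equivalent to x^(k+1) / ((k+1) · e^γ · log log log x) as x → ∞, where γ is the Euler–Mascheroni constant. -/

import Mathlib

open Filter Asymptotics Real

/-- A positive integer `n` is *cyclic* if `gcd(n, φ(n)) = 1`. -/
def IsCyclicNum (n : ℕ) : Prop := 0 < n ∧ Nat.gcd n (Nat.totient n) = 1

instance : DecidablePred IsCyclicNum := fun n =>
  decidable_of_iff (0 < n ∧ Nat.gcd n (Nat.totient n) = 1) Iff.rfl

/-- The `n`-th cyclic number, indexed from 1: `cyclicNum 1 = 1`, `cyclicNum 2 = 2`, .... -/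
noncomputable def cyclicNum (n : ℕ) : ℕ := Nat.nth IsCyclicNum (n - 1)

/-- The number of cyclic numbers less than or equal to the real number `x`. -/
noncomputable def cyclicCount (x : ℝ) : ℕ :=
  ((Finset.range (⌊x⌋₊ + 1)).filter IsCyclicNum).card

/-- The sum of the `k`-th powers of all cyclic numbers `≤ x`. -/
noncomputable def cyclicPowSum (k : ℕ) (x : ℝ) : ℝ :=
  ∑ n ∈ (Finset.range (⌊x⌋₊ + 1)).filter IsCyclicNum, (n : ℝ) ^ k

namespace CycN

/-- `-log (1 - 1/p)` on primes, zero elsewhere. -/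
noncomputable def mw (n : ℕ) : ℝ := if n.Prime then -Real.log (1 - 1 / (n : ℝ)) else 0

lemma mw_prime {p : ℕ} (hp : p.Prime) : mw p = -Real.log (1 - 1 / (p : ℝ)) := by
  simp [mw, hp]

lemma mw_lower {p : ℕ} (hp : p.Prime) : 1 / (p : ℝ) ≤ mw p := by
  rw [mw_prime hp]
  have h2 : (2 : ℝ) ≤ p := by exact_mod_cast hp.two_le
  have : (0 : ℝ) < 1 - 1 / (p : ℝ) := by
    rw [sub_pos, div_lt_one (by linarith)]; linarith
  have := Real.log_le_sub_one_of_pos this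
  linarith

lemma mw_upper {p : ℕ} (hp : p.Prime) : mw p ≤ 1 / ((p : ℝ) - 1) := by
  rw [mw_prime hp]
  have h2 : (2 : ℝ) ≤ p := by exact_mod_cast hp.two_le
  have hpos : (0 : ℝ) < 1 - 1 / (p : ℝ) := by
    rw [sub_pos, div_lt_one (by linarith)]; linarith
  have := Real.one_sub_inv_le_log_of_pos hpos
  have e : (1 - 1 / (p : ℝ))⁻¹ = 1 + 1 / ((p : ℝ) - 1) := by
    have : (p : ℝ) - 1 ≠ 0 := by linarith
    have : (p : ℝ) ≠ 0 := by linarith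
    field_simp
    ring
  rw [e] at this
  linarith

lemma mw_nonneg (n : ℕ) : 0 ≤ mw n := by
  by_cases h : n.Prime
  · exact le_trans (by positivity) (mw_lower h)
  · simp [mw, h]

lemma summable_log_div_sq : Summable (fun n : ℕ => Real.log n / ((n : ℝ) * (n - 1))) := by
  have hs : Summable (fun n : ℕ => 4 * (1 / (n : ℝ) ^ (3 / 2 : ℝ))) :=
    (Real.summable_one_div_nat_rpow.mpr (by norm_num)).mul_left 4
  refine Summable.of_norm_bounded_eventually_nat hs ?_
  filter_upwards [eventually_ge_atTop 2] with n hn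
  have h2 : (2 : ℝ) ≤ n := by exact_mod_cast hn
  have hl := Real.log_le_rpow_div (x := (n : ℝ)) (by linarith) (ε := 1 / 2) (by norm_num)
  have hl0 : 0 ≤ Real.log n := Real.log_nonneg (by linarith)
  rw [Real.norm_of_nonneg (div_nonneg hl0 (by nlinarith))]
  have e : (n : ℝ) ^ (3 / 2 : ℝ) * (n : ℝ) ^ (1 / 2 : ℝ) = (n : ℝ) ^ 2 := by
    rw [← Real.rpow_add (by linarith), ← Real.rpow_natCast]; norm_num
  have hp : 0 < (n : ℝ) ^ (3 / 2 : ℝ) := Real.rpow_pos_of_pos (by linarith) _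
  have hp' : 0 < (n : ℝ) ^ (1 / 2 : ℝ) := Real.rpow_pos_of_pos (by linarith) _
  rw [mul_one_div, div_le_div_iff₀ (by nlinarith) hp]
  calc Real.log n * (n : ℝ) ^ (3 / 2 : ℝ) ≤ ((n : ℝ) ^ (1 / 2 : ℝ) / (1 / 2)) * (n : ℝ) ^ (3 / 2 : ℝ) := by
        gcongr
    _ = 2 * (n : ℝ) ^ 2 := by rw [← e]; ring
    _ ≤ 4 * (n * (n - 1)) := by nlinarith

lemma log_factorial_eq (n : ℕ) : Real.log (n.factorial : ℝ) =
    ∑ p ∈ (Finset.range (n + 1)).filter Nat.Prime, (padicValNat p n.factorial : ℝ) * Real.log p := by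
  rw [Real.log_nat_eq_sum_factorization]
  rw [Finsupp.sum_of_support_subset (s := (Finset.range (n + 1)).filter Nat.Prime)]
  · refine Finset.sum_congr rfl fun p hp => ?_
    rw [Nat.factorization_def _ (Finset.mem_filter.mp hp).2]
  · intro p hp
    rw [Nat.support_factorization, Nat.mem_primeFactors] at hp
    simp only [Finset.mem_filter, Finset.mem_range]
    exact ⟨Nat.lt_succ_of_le ((Nat.Prime.dvd_factorial hp.1).mp hp.2.1), hp.1⟩
  · simp

lemma div_le_padicValNat_factorial {p n : ℕ} (hp : p.Prime) : n / p ≤ padicValNat p n.factorial := by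
  have := Fact.mk hp
  rw [padicValNat_factorial (b := Nat.log p n + 2) (by omega)]
  have := Finset.single_le_sum (f := fun i => n / p ^ i) (s := Finset.Ico 1 (Nat.log p n + 2))
    (fun i _ => Nat.zero_le _) (a := 1) (by simp)
  simpa using this

lemma padicValNat_factorial_le_real {p n : ℕ} (hp : p.Prime) :
    (padicValNat p n.factorial : ℝ) ≤ n / ((p : ℝ) - 1) := by
  have := Fact.mk hp
  have h2 : (2 : ℝ) ≤ p := by exact_mod_cast hp.two_le
  rw [le_div_iff₀ (by linarith)]
  have h := sub_one_mul_padicValNat_factorial (p := p) n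
  have h' : (p - 1) * padicValNat p n.factorial ≤ n := by rw [h]; exact Nat.sub_le _ _
  have : (((p - 1 : ℕ) : ℝ)) * padicValNat p n.factorial ≤ n := by exact_mod_cast h'
  rw [Nat.cast_sub hp.one_le] at this
  push_cast at this
  linarith

lemma log_factorial_lower (n : ℕ) : n * Real.log n - n ≤ Real.log (n.factorial : ℝ) := by
  induction n with
  | zero => simp
  | succ n ih =>
    rw [Nat.factorial_succ]
    push_cast
    rw [Real.log_mul (by positivity) (by positivity)]
    rcases Nat.eq_zero_or_pos n with rfl | hn
    · simp
    have hn' : (0 : ℝ) < n := by exact_mod_cast hn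
    have : Real.log ((n : ℝ) + 1) ≤ Real.log n + 1 / n := by
      have h1 : (n : ℝ) + 1 = n * (1 + 1 / n) := by field_simp
      rw [h1, Real.log_mul (by positivity) (by positivity)]
      have := Real.log_le_sub_one_of_pos (x := 1 + 1 / (n : ℝ)) (by positivity)
      linarith
    have h3 : n * Real.log ((n : ℝ) + 1) ≤ n * Real.log n + 1 := by
      calc n * Real.log ((n : ℝ) + 1) ≤ n * (Real.log n + 1 / n) := by gcongr
        _ = _ := by field_simp
    nlinarith

lemma log_factorial_upper (n : ℕ) : Real.log (n.factorial : ℝ) ≤ n * Real.log n := by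
  have h : (n.factorial : ℝ) ≤ (n : ℝ) ^ n := by exact_mod_cast Nat.factorial_le_pow n
  calc _ ≤ Real.log ((n : ℝ) ^ n) := Real.log_le_log (by positivity) h
    _ = _ := by rw [Real.log_pow]

lemma mertens_one : ∃ C : ℝ, 0 ≤ C ∧ ∀ n : ℕ, 1 ≤ n →
    |∑ i ∈ Finset.range (n + 1), mw i * Real.log i - Real.log n| ≤ C := by
  set K := ∑' n : ℕ, Real.log n / ((n : ℝ) * (n - 1)) with hK
  have hterm : ∀ n : ℕ, 0 ≤ Real.log n / ((n : ℝ) * (n - 1)) := by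
    intro n
    rcases n with _ | n
    · simp
    · push_cast
      have : 0 ≤ Real.log ((n : ℝ) + 1) := Real.log_nonneg (by linarith [n.cast_nonneg (α := ℝ)])
      have h1 : (0 : ℝ) ≤ (n + 1) * (n + 1 - 1) := by
        have := n.cast_nonneg (α := ℝ); nlinarith
      exact div_nonneg this h1
  have hK0 : 0 ≤ K := tsum_nonneg hterm
  have hKs : ∀ s : Finset ℕ, ∑ n ∈ s, Real.log n / ((n : ℝ) * (n - 1)) ≤ K := fun s =>
    summable_log_div_sq.sum_le_tsum s (fun i _ => hterm i)
  refine ⟨1 + Real.log 4 + K, by have := Real.log_nonneg (x := 4) (by norm_num); linarith, ?_⟩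
  intro n hn
  have hn' : (0 : ℝ) < n := by exact_mod_cast hn
  set S := (Finset.range (n + 1)).filter Nat.Prime with hS
  have hsum : ∑ i ∈ Finset.range (n + 1), mw i * Real.log i = ∑ p ∈ S, mw p * Real.log p := by
    rw [hS, Finset.sum_filter]
    refine Finset.sum_congr rfl fun i _ => ?_
    by_cases h : i.Prime
    · simp [h]
    · simp [h, mw]
  have hpr : ∀ p ∈ S, p.Prime := fun p hp => (Finset.mem_filter.mp hp).2
  have hlogp : ∀ p ∈ S, 0 ≤ Real.log p := fun p hp =>
    Real.log_nonneg (by exact_mod_cast (hpr p hp).one_le)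
  have htheta : ∑ p ∈ S, Real.log p ≤ Real.log 4 * n := by
    have := Chebyshev.theta_le_log4_mul_x (x := (n : ℝ)) hn'.le
    rw [Chebyshev.theta_eq_sum_Icc, Nat.floor_natCast] at this
    refine le_trans (le_of_eq ?_) this
    refine Finset.sum_congr ?_ fun _ _ => rfl
    ext p; simp [hS]
  rw [hsum, abs_le]
  have hfl := log_factorial_lower n
  have hfu := log_factorial_upper n
  rw [log_factorial_eq] at hfl hfu
  have hsplit : ∀ p ∈ S, Real.log p / ((p : ℝ) - 1) = Real.log p / p + Real.log p / ((p : ℝ) * (p - 1)) := by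
    intro p hp
    have h2 : (2 : ℝ) ≤ p := by exact_mod_cast (hpr p hp).two_le
    have : (p : ℝ) - 1 ≠ 0 := by linarith
    have : (p : ℝ) ≠ 0 := by linarith
    field_simp
    ring
  have hs1 : ∑ p ∈ S, Real.log p / ((p : ℝ) - 1) ≤ ∑ p ∈ S, Real.log p / p + K := by
    rw [Finset.sum_congr rfl hsplit, Finset.sum_add_distrib]
    linarith [hKs S]
  have hlow : ∑ p ∈ S, Real.log p / p ≤ ∑ p ∈ S, mw p * Real.log p := by
    refine Finset.sum_le_sum fun p hp => ?_
    have := mul_le_mul_of_nonneg_right (mw_lower (hpr p hp)) (hlogp p hp)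
    calc _ = 1 / (p : ℝ) * Real.log p := by ring
      _ ≤ _ := this
  have hup : ∑ p ∈ S, mw p * Real.log p ≤ ∑ p ∈ S, Real.log p / ((p : ℝ) - 1) := by
    refine Finset.sum_le_sum fun p hp => ?_
    have := mul_le_mul_of_nonneg_right (mw_upper (hpr p hp)) (hlogp p hp)
    calc _ ≤ _ := this
      _ = _ := by ring
  have hA : n * Real.log n - n ≤ n * ∑ p ∈ S, Real.log p / ((p : ℝ) - 1) := by
    refine hfl.trans ?_
    rw [Finset.mul_sum]
    refine Finset.sum_le_sum fun p hp => ?_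
    calc _ ≤ n / ((p : ℝ) - 1) * Real.log p :=
          mul_le_mul_of_nonneg_right (padicValNat_factorial_le_real (hpr p hp)) (hlogp p hp)
      _ = _ := by ring
  have hB : n * ∑ p ∈ S, Real.log p / p ≤ n * Real.log n + Real.log 4 * n := by
    refine le_trans ?_ (add_le_add hfu htheta)
    rw [← Finset.sum_add_distrib, Finset.mul_sum]
    refine Finset.sum_le_sum fun p hp => ?_
    have h1 : (n : ℝ) / p ≤ padicValNat p n.factorial + 1 := by
      have := (Nat.lt_floor_add_one ((n : ℝ) / p)).le
      rw [Nat.floor_div_eq_div] at this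
      have h3 : ((n / p : ℕ) : ℝ) ≤ padicValNat p n.factorial := by
        exact_mod_cast div_le_padicValNat_factorial (hpr p hp)
      linarith
    calc (n : ℝ) * (Real.log p / p) = (n : ℝ) / p * Real.log p := by ring
      _ ≤ (padicValNat p n.factorial + 1) * Real.log p :=
          mul_le_mul_of_nonneg_right h1 (hlogp p hp)
      _ = _ := by ring
  have hA' : Real.log n - 1 ≤ ∑ p ∈ S, Real.log p / ((p : ℝ) - 1) := by
    by_contra! h
    have := mul_lt_mul_of_pos_left h hn'
    nlinarith
  have hB' : ∑ p ∈ S, Real.log p / p ≤ Real.log n + Real.log 4 := by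
    by_contra! h
    have := mul_lt_mul_of_pos_left h hn'
    nlinarith
  have := Real.log_nonneg (x := 4) (by norm_num)
  constructor <;> linarith


open Topology

noncomputable def eN (m : ℕ) : ℕ := ⌊Real.exp m⌋₊
noncomputable def eG (m : ℕ) : ℝ := ∑ i ∈ Finset.range (eN m + 1), mw i
noncomputable def eA (m : ℕ) : ℝ := ∑ i ∈ Finset.range (eN m + 1), mw i * Real.log i
noncomputable def eW (m : ℕ) : ℝ := ∑ i ∈ Finset.Ico (eN m + 1) (eN (m + 1) + 1), mw i
noncomputable def eD (m : ℕ) : ℝ := ∑ i ∈ Finset.Ico (eN m + 1) (eN (m + 1) + 1), mw i * Real.log i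
noncomputable def ec (m : ℕ) : ℝ := eW m - 1 / ((m : ℝ) + 1)

lemma eN_mono {a b : ℕ} (h : a ≤ b) : eN a ≤ eN b :=
  Nat.floor_mono (Real.exp_le_exp.mpr (by exact_mod_cast h))

lemma eG_succ (m : ℕ) : eG (m + 1) = eG m + eW m := by
  unfold eG eW
  rw [Finset.range_eq_Ico, Finset.range_eq_Ico, Finset.sum_Ico_consecutive _ (Nat.zero_le _)]
  have := eN_mono (Nat.le_succ m); simpa using this

lemma eA_succ (m : ℕ) : eA (m + 1) = eA m + eD m := by
  unfold eA eD
  rw [Finset.range_eq_Ico, Finset.range_eq_Ico, Finset.sum_Ico_consecutive _ (Nat.zero_le _)]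
  have := eN_mono (Nat.le_succ m); simpa using this

lemma eN_zero : eN 0 = 1 := by simp [eN]

lemma eG_zero : eG 0 = 0 := by
  simp [eG, eN_zero, Finset.sum_range_succ, mw, Nat.not_prime_zero, Nat.not_prime_one]

lemma eA_zero : eA 0 = 0 := by
  simp [eA, eN_zero, Finset.sum_range_succ, mw, Nat.not_prime_zero, Nat.not_prime_one]

lemma eG_eq (M : ℕ) : eG M = ∑ m ∈ Finset.range M, eW m := by
  induction M with
  | zero => simp [eG_zero]
  | succ M ih => rw [eG_succ, ih, Finset.sum_range_succ]

lemma eA_eq (M : ℕ) : eA M = ∑ m ∈ Finset.range M, eD m := by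
  induction M with
  | zero => simp [eA_zero]
  | succ M ih => rw [eA_succ, ih, Finset.sum_range_succ]

lemma mem_bin {m i : ℕ} (h : i ∈ Finset.Ico (eN m + 1) (eN (m + 1) + 1)) :
    (m : ℝ) < Real.log i ∧ Real.log i ≤ m + 1 := by
  rw [Finset.mem_Ico, Nat.lt_succ_iff, Nat.succ_le_iff] at h
  have h1 : Real.exp m < i := (Nat.floor_lt (Real.exp_pos _).le).mp h.1
  have h2 : (i : ℝ) ≤ Real.exp (m + 1) := by
    have := (Nat.le_floor_iff (Real.exp_pos _).le).mp h.2
    push_cast at this; exact this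
  have hi : (0 : ℝ) < i := lt_trans (Real.exp_pos _) h1
  exact ⟨(Real.lt_log_iff_exp_lt hi).mpr h1, (Real.log_le_iff_le_exp hi).mpr h2⟩

lemma eD_le (m : ℕ) : eD m ≤ (m + 1) * eW m := by
  unfold eD eW
  rw [Finset.mul_sum]
  refine Finset.sum_le_sum fun i hi => ?_
  rw [mul_comm]
  exact mul_le_mul_of_nonneg_right (mem_bin hi).2 (mw_nonneg i)

lemma le_eD (m : ℕ) : m * eW m ≤ eD m := by
  unfold eD eW
  rw [Finset.mul_sum]
  refine Finset.sum_le_sum fun i hi => ?_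
  rw [mul_comm]
  exact mul_le_mul_of_nonneg_left (mem_bin hi).1.le (mw_nonneg i)

lemma eA_bound : ∃ C : ℝ, 0 ≤ C ∧ ∀ m : ℕ, |eA m - m| ≤ C := by
  obtain ⟨C, hC, h⟩ := mertens_one
  refine ⟨C + 1, by linarith, fun m => ?_⟩
  have h1 : 1 ≤ eN m := by
    rw [← eN_zero]; exact eN_mono (Nat.zero_le m)
  have h2 := h (eN m) h1
  have h1' : (1 : ℝ) ≤ eN m := by exact_mod_cast h1
  have h3 : Real.log (eN m) ≤ m := by
    rw [Real.log_le_iff_le_exp (by linarith)]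
    exact Nat.floor_le (Real.exp_pos _).le
  have h4 : (m : ℝ) - 1 ≤ Real.log (eN m) := by
    rw [Real.le_log_iff_exp_le (by linarith), Real.exp_sub]
    have h5 : Real.exp m < eN m + 1 := Nat.lt_floor_add_one _
    have h6 : (2 : ℝ) ≤ Real.exp 1 := by have := Real.add_one_le_exp (1 : ℝ); linarith
    rw [div_le_iff₀ (Real.exp_pos 1)]
    nlinarith
  unfold eA
  rw [abs_le] at h2 ⊢
  constructor <;> linarith [h2.1, h2.2]

lemma eW_nonneg (m : ℕ) : 0 ≤ eW m := Finset.sum_nonneg fun i _ => mw_nonneg i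

lemma ec_tendsto : ∃ l : ℝ, Tendsto (fun M => ∑ m ∈ Finset.range M, ec m) atTop (𝓝 l) := by
  obtain ⟨C, hC, h⟩ := eA_bound
  have hD : ∀ m, eD m ≤ 2 * C + 1 := by
    intro m
    have h1 := h m
    have h2 := h (m + 1)
    rw [eA_succ] at h2
    rw [abs_le] at h1 h2
    push_cast at h2
    linarith [h1.1, h1.2, h2.1, h2.2]
  have c1 : CauchySeq fun M => ∑ m ∈ Finset.range M, (1 / ((m : ℝ) + 1)) • (eD m - 1) := by
    refine Antitone.cauchySeq_series_mul_of_tendsto_zero_of_bounded (b := C) ?_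
      tendsto_one_div_add_atTop_nhds_zero_nat ?_
    · intro a b hab
      have : (a : ℝ) ≤ b := by exact_mod_cast hab
      exact one_div_le_one_div_of_le (by positivity) (by linarith)
    · intro n
      rw [Finset.sum_sub_distrib, ← eA_eq]
      simpa using h n
  have c2 : Summable fun m : ℕ => eW m - eD m / (m + 1) := by
    have hs : Summable (fun n : ℕ => (2 * C + 1) * (1 / (n : ℝ) ^ 2)) :=
      (Real.summable_one_div_nat_pow.mpr (by norm_num)).mul_left _
    refine Summable.of_norm_bounded_eventually_nat hs ?_
    filter_upwards [eventually_ge_atTop 1] with m hm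
    have hm' : (1 : ℝ) ≤ m := by exact_mod_cast hm
    have h1 := eD_le m
    have h2 := le_eD m
    have h0 := eW_nonneg m
    have h3 := hD m
    have h4 : 0 ≤ eW m - eD m / (m + 1) := by
      rw [sub_nonneg, div_le_iff₀ (by positivity)]; linarith
    rw [Real.norm_of_nonneg h4]
    have h5 : eW m ≤ eD m / m := by
      rw [le_div_iff₀ (by positivity)]; linarith
    have h6 : 0 ≤ eD m := by nlinarith
    calc eW m - eD m / (m + 1) ≤ eD m / m - eD m / (m + 1) := by linarith
      _ = eD m * (1 / (m * (m + 1))) := by field_simp; ring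
      _ ≤ (2 * C + 1) * (1 / (m : ℝ) ^ 2) := by
        gcongr
        nlinarith
  have c3 := c2.hasSum.tendsto_sum_nat
  obtain ⟨l1, hl1⟩ := cauchySeq_tendsto_of_complete c1
  refine ⟨_, (hl1.add c3).congr fun M => ?_⟩
  rw [← Finset.sum_add_distrib]
  refine Finset.sum_congr rfl fun m _ => ?_
  simp only [smul_eq_mul, ec]
  ring

noncomputable def eb (n : ℕ) : ℕ := ⌈Real.log n⌉₊

lemma eb_bin {m i : ℕ} (h : i ∈ Finset.Ico (eN m + 1) (eN (m + 1) + 1)) : eb i = m + 1 := by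
  obtain ⟨h1, h2⟩ := mem_bin h
  unfold eb
  rw [Nat.ceil_eq_iff (by omega)]
  push_cast
  constructor
  · simpa using h1
  · exact h2

lemma mw_le_two_div (n : ℕ) : mw n ≤ 2 / n := by
  by_cases h : n.Prime
  · refine (mw_upper h).trans ?_
    have h2 : (2 : ℝ) ≤ n := by exact_mod_cast h.two_le
    rw [div_le_div_iff₀ (by linarith) (by linarith)]
    linarith
  · simp only [mw, h, if_false]; positivity

lemma exp_eb_le (n : ℕ) (hn : 1 ≤ n) {δ : ℝ} (hδ : 0 < δ) :
    Real.exp (-δ * eb n) ≤ (n : ℝ) ^ (-δ) := by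
  have hn' : (0 : ℝ) < n := by exact_mod_cast hn
  rw [Real.rpow_def_of_pos hn']
  apply Real.exp_le_exp.mpr
  have : Real.log n ≤ eb n := Nat.le_ceil _
  nlinarith

lemma le_exp_eb (n : ℕ) (hn : 1 ≤ n) {δ : ℝ} (hδ : 0 < δ) :
    (n : ℝ) ^ (-δ) * (1 - δ) ≤ Real.exp (-δ * eb n) := by
  have hn' : (0 : ℝ) < n := by exact_mod_cast hn
  have hn1 : (1 : ℝ) ≤ n := by exact_mod_cast hn
  have h1 : (eb n : ℝ) ≤ Real.log n + 1 := (Nat.ceil_lt_add_one (Real.log_nonneg hn1)).le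
  calc (n : ℝ) ^ (-δ) * (1 - δ) ≤ (n : ℝ) ^ (-δ) * Real.exp (-δ) := by
        gcongr
        have := Real.add_one_le_exp (-δ); linarith
    _ = Real.exp (Real.log n * (-δ) + -δ) := by rw [Real.rpow_def_of_pos hn', Real.exp_add]
    _ ≤ _ := by apply Real.exp_le_exp.mpr; nlinarith

lemma summable_mw_exp {δ : ℝ} (hδ : 0 < δ) : Summable fun n => mw n * Real.exp (-δ * eb n) := by
  have hs : Summable (fun n : ℕ => 2 * (1 / (n : ℝ) ^ (1 + δ))) :=
    (Real.summable_one_div_nat_rpow.mpr (by linarith)).mul_left _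
  refine Summable.of_norm_bounded_eventually_nat hs ?_
  filter_upwards [eventually_ge_atTop 1] with n hn
  have hn' : (0 : ℝ) < n := by exact_mod_cast hn
  rw [Real.norm_of_nonneg (mul_nonneg (mw_nonneg n) (Real.exp_pos _).le)]
  calc mw n * Real.exp (-δ * eb n) ≤ 2 / n * (n : ℝ) ^ (-δ) :=
        mul_le_mul (mw_le_two_div n) (exp_eb_le n hn hδ) (Real.exp_pos _).le (by positivity)
    _ = _ := by rw [Real.rpow_add hn', Real.rpow_neg hn'.le, Real.rpow_one]; field_simp

lemma ec_abel {δ : ℝ} (hδ : 0 < δ) :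
    Real.exp (-δ) * ∑' m, ec m * Real.exp (-δ) ^ m =
      ∑' n, mw n * Real.exp (-δ * eb n) + Real.log (1 - Real.exp (-δ)) := by
  set x := Real.exp (-δ) with hx
  have hx0 : 0 < x := Real.exp_pos _
  have hx1 : x < 1 := by rw [hx]; simpa using hδ
  obtain ⟨l, hl⟩ := ec_tendsto
  have s1 : Summable fun m => ec m * x ^ m :=
    summable_powerSeries_of_norm_lt_one hl.cauchySeq (by rw [Real.norm_of_nonneg hx0.le]; exact hx1)
  have t1 := (s1.hasSum.tendsto_sum_nat).const_mul x
  have t2 := (summable_mw_exp hδ).hasSum.tendsto_sum_nat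
  have hNt : Tendsto (fun M => eN M + 1) atTop atTop := by
    refine (tendsto_add_atTop_nat 1).comp ?_
    exact tendsto_nat_floor_atTop.comp (Real.tendsto_exp_atTop.comp tendsto_natCast_atTop_atTop)
  have t3 := t2.comp hNt
  have t4 := (Real.hasSum_pow_div_log_of_abs_lt_one (x := x) (by rw [abs_of_pos hx0]; exact hx1)).tendsto_sum_nat
  have key : ∀ M, ∑ i ∈ Finset.range (eN M + 1), mw i * Real.exp (-δ * eb i) =
      ∑ m ∈ Finset.range M, eW m * x ^ (m + 1) := by
    intro M
    induction M with
    | zero => simp [eN_zero, Finset.sum_range_succ, mw, Nat.not_prime_zero, Nat.not_prime_one]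
    | succ M ih =>
      rw [Finset.sum_range_succ (n := M), ← ih]
      have := eN_mono (Nat.le_succ M)
      rw [Finset.range_eq_Ico, Finset.range_eq_Ico, ← Finset.sum_Ico_consecutive _ (Nat.zero_le _)
        (show eN M + 1 ≤ eN (M + 1) + 1 by simpa using this)]
      congr 1
      unfold eW
      rw [Finset.sum_mul]
      refine Finset.sum_congr rfl fun i hi => ?_
      rw [eb_bin hi, hx, ← Real.exp_nat_mul]
      congr 2; push_cast; ring
  have t5 := t3.sub t4
  refine (tendsto_nhds_unique t1 (t5.congr fun M => ?_)).trans (by ring)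
  simp only [Function.comp]
  rw [key, Finset.mul_sum, ← Finset.sum_sub_distrib]
  refine Finset.sum_congr rfl fun m _ => ?_
  simp only [ec]
  ring


open Topology

noncomputable def mz (s : ℝ) (n : ℕ) : ℝ :=
  if n.Prime then -Real.log (1 - (n : ℝ) ^ (-s)) else 0

noncomputable def zr (s : ℝ) : ℝ := ∑' n : ℕ, 1 / (n : ℝ) ^ s

lemma neg_log_lower {u : ℝ} (hu1 : u ≤ 1 / 2) : u ≤ -Real.log (1 - u) := by
  have := Real.log_le_sub_one_of_pos (x := 1 - u) (by linarith)
  linarith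

lemma neg_log_upper {u : ℝ} (hu1 : u ≤ 1 / 2) : -Real.log (1 - u) ≤ u + 2 * u ^ 2 := by
  have := Real.one_sub_inv_le_log_of_pos (x := 1 - u) (by linarith)
  have h : (1 - u)⁻¹ ≤ 1 + u + 2 * u ^ 2 := by
    rw [inv_le_iff_one_le_mul₀ (by linarith)]
    nlinarith [sq_nonneg u]
  linarith

lemma prime_rpow_le {n : ℕ} (hn : n.Prime) {s : ℝ} (hs : 1 ≤ s) : (n : ℝ) ^ (-s) ≤ 1 / n := by
  have h2 : (2 : ℝ) ≤ n := by exact_mod_cast hn.two_le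
  rw [Real.rpow_neg (by linarith), one_div]
  apply inv_anti₀ (by linarith)
  calc (n : ℝ) = (n : ℝ) ^ (1 : ℝ) := (Real.rpow_one _).symm
    _ ≤ _ := Real.rpow_le_rpow_of_exponent_le (by linarith) hs

lemma prime_inv_le {n : ℕ} (hn : n.Prime) : 1 / (n : ℝ) ≤ 1 / 2 := by
  have h2 : (2 : ℝ) ≤ n := by exact_mod_cast hn.two_le
  exact one_div_le_one_div_of_le (by norm_num) h2

lemma mz_nonneg {s : ℝ} (hs : 1 ≤ s) (n : ℕ) : 0 ≤ mz s n := by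
  unfold mz
  split_ifs with h
  · have h1 := neg_log_lower ((prime_rpow_le h hs).trans (prime_inv_le h))
    have : 0 ≤ (n : ℝ) ^ (-s) := by positivity
    linarith
  · rfl

lemma mz_le {s : ℝ} (hs : 1 ≤ s) (n : ℕ) : mz s n ≤ 2 * (1 / (n : ℝ) ^ s) := by
  unfold mz
  split_ifs with h
  · have h0 := (prime_rpow_le h hs).trans (prime_inv_le h)
    have h1 := neg_log_upper h0
    have : 0 ≤ (n : ℝ) ^ (-s) := by positivity
    rw [one_div, ← Real.rpow_neg (by positivity)]
    nlinarith
  · positivity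

lemma mz_summable {s : ℝ} (hs : 1 < s) : Summable (mz s) :=
  Summable.of_nonneg_of_le (mz_nonneg hs.le) (mz_le hs.le)
    ((Real.summable_one_div_nat_rpow.mpr hs).mul_left 2)

lemma zr_eq {s : ℝ} (hs : 1 < s) : zr s = Real.exp (∑' n, mz s n) := by
  have h := riemannZeta_eulerProduct_exp_log (s := (s : ℂ)) (by simpa using hs)
  rw [zeta_eq_tsum_one_div_nat_cpow (by simpa using hs)] at h
  have e1 : ∑' n : ℕ, 1 / (n : ℂ) ^ (s : ℂ) = ((zr s : ℝ) : ℂ) := by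
    unfold zr
    rw [Complex.ofReal_tsum]
    refine tsum_congr fun n => ?_
    push_cast [Complex.ofReal_cpow (Nat.cast_nonneg n)]
    rfl
  have e2 : ∑' p : Nat.Primes, -Complex.log (1 - (p : ℂ) ^ (-(s : ℂ))) =
      ((∑' n, mz s n : ℝ) : ℂ) := by
    have e3 : ∑' n, mz s n = ∑' p : Nat.Primes, mz s p := by
      have := tsum_subtype {p : ℕ | p.Prime} (mz s)
      rw [show (∑' p : Nat.Primes, mz s p) = ∑' x : {p : ℕ | p.Prime}, mz s x from rfl, this]
      refine tsum_congr fun n => ?_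
      by_cases hn : n.Prime
      · simp [Set.indicator, hn]
      · simp [Set.indicator, hn, mz]
    rw [e3, Complex.ofReal_tsum]
    refine tsum_congr fun p => ?_
    have hp := p.2
    have h0 := (prime_rpow_le hp hs.le).trans (prime_inv_le hp)
    rw [mz, if_pos hp]
    rw [Complex.ofReal_neg, Complex.ofReal_log (by linarith)]
    push_cast [Complex.ofReal_cpow (Nat.cast_nonneg (p : ℕ))]
    rfl
  rw [e1, e2, ← Complex.ofReal_exp] at h
  exact_mod_cast h.symm

lemma zr_tendsto : Tendsto (fun δ : ℝ => δ * zr (1 + δ)) (𝓝[>] 0) (𝓝 1) := by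
  have h := tendsto_sub_mul_tsum_nat_rpow
  have h2 : Tendsto (fun δ : ℝ => 1 + δ) (𝓝[>] 0) (𝓝[>] 1) := by
    refine tendsto_nhdsWithin_of_tendsto_nhds_of_eventually_within _ ?_ ?_
    · have : Tendsto (fun δ : ℝ => 1 + δ) (𝓝 0) (𝓝 (1 + 0)) := (continuous_const.add continuous_id).tendsto 0
      rw [add_zero] at this
      exact this.mono_left nhdsWithin_le_nhds
    · filter_upwards [self_mem_nhdsWithin] with δ hδ
      simpa using hδ
  refine (h.comp h2).congr fun δ => ?_
  simp [zr]

lemma delta_log_zr : Tendsto (fun δ : ℝ => δ * Real.log (zr (1 + δ))) (𝓝[>] 0) (𝓝 0) := by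
  have h1 : Tendsto (fun δ : ℝ => δ) (𝓝[>] 0) (𝓝 0) := nhdsWithin_le_nhds
  have h2 := (Real.continuousAt_log (x := 1) one_ne_zero).tendsto.comp zr_tendsto
  rw [Real.log_one] at h2
  have h3 := h1.mul h2
  have h4 : Tendsto (fun δ : ℝ => δ * Real.log δ) (𝓝[>] 0) (𝓝 0) := by
    have := Real.continuous_mul_log.tendsto 0
    simp only [Real.log_zero, mul_zero] at this
    exact this.mono_left nhdsWithin_le_nhds
  have h5 := h3.sub h4
  simp only [mul_zero, sub_zero] at h5
  refine h5.congr' ?_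
  filter_upwards [self_mem_nhdsWithin] with δ hδ
  have hδ' : (0 : ℝ) < δ := hδ
  simp only [Function.comp]
  rw [Real.log_mul hδ'.ne' (by rw [zr_eq (by linarith)]; exact (Real.exp_pos _).ne')]
  ring

noncomputable def tA (δ : ℝ) (n : ℕ) : ℝ := if n.Prime then
  (mw n - 1 / n) * Real.exp (-δ * eb n) - (mz (1 + δ) n - (n : ℝ) ^ (-(1 + δ))) else 0
noncomputable def tB (δ : ℝ) (n : ℕ) : ℝ := if n.Prime then
  (n : ℝ) ^ (-(1 + δ)) - 1 / n * Real.exp (-δ * eb n) else 0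

lemma tAB {δ : ℝ} (n : ℕ) : mw n * Real.exp (-δ * eb n) = mz (1 + δ) n + tA δ n - tB δ n := by
  by_cases h : n.Prime
  · simp only [tA, tB, h, if_true]; ring
  · simp [tA, tB, h, mw, mz]

lemma tA_bound {δ : ℝ} (hδ : 0 < δ) (n : ℕ) : ‖tA δ n‖ ≤ 2 * (1 / (n : ℝ) ^ 2) := by
  unfold tA
  split_ifs with h
  · have h2 : (2 : ℝ) ≤ n := by exact_mod_cast h.two_le
    have a1 := mw_lower h
    have a2 : mw n ≤ 1 / n + 2 * (1 / (n : ℝ) ^ 2) := by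
      rw [mw_prime h]
      have := neg_log_upper (prime_inv_le h)
      rwa [one_div_pow] at this
    have hu := prime_rpow_le h (s := 1 + δ) (by linarith)
    have b1 : (n : ℝ) ^ (-(1 + δ)) ≤ mz (1 + δ) n := by
      rw [mz, if_pos h]; exact neg_log_lower (hu.trans (prime_inv_le h))
    have hu0 : 0 ≤ (n : ℝ) ^ (-(1 + δ)) := by positivity
    have b2 : mz (1 + δ) n ≤ (n : ℝ) ^ (-(1 + δ)) + 2 * (1 / (n : ℝ) ^ 2) := by
      rw [mz, if_pos h]
      have := neg_log_upper (hu.trans (prime_inv_le h))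
      have h3 : ((n : ℝ) ^ (-(1 + δ))) ^ 2 ≤ (1 / (n : ℝ)) ^ 2 := by gcongr
      rw [one_div_pow] at h3
      linarith
    have c1 : Real.exp (-δ * eb n) ≤ 1 := by
      rw [Real.exp_le_one_iff]
      have := (eb n).cast_nonneg (α := ℝ)
      nlinarith
    have c0 := Real.exp_pos (-δ * eb n)
    have d0 : 0 ≤ (mw n - 1 / n) * Real.exp (-δ * eb n) := mul_nonneg (by linarith) c0.le
    have d1 : (mw n - 1 / n) * Real.exp (-δ * eb n) ≤ mw n - 1 / n :=
      mul_le_of_le_one_right (by linarith) c1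
    rw [Real.norm_eq_abs, abs_le]
    constructor <;> linarith
  · simp

lemma tA_tendsto : Tendsto (fun δ => ∑' n, tA δ n) (𝓝[>] 0) (𝓝 0) := by
  have hs : Summable (fun n : ℕ => 2 * (1 / (n : ℝ) ^ 2)) :=
    (Real.summable_one_div_nat_pow.mpr (by norm_num)).mul_left _
  have := tendsto_tsum_of_dominated_convergence (𝓕 := 𝓝[>] (0 : ℝ)) (f := tA) (g := fun _ => (0 : ℝ)) hs ?_ ?_
  · simpa using this
  · intro n
    by_cases h : n.Prime
    · have h2 : (2 : ℝ) ≤ n := by exact_mod_cast h.two_le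
      have : Tendsto (fun δ : ℝ => tA δ n) (𝓝 0) (𝓝 (tA 0 n)) := by
        refine ContinuousAt.tendsto ?_
        simp only [tA, h, if_true, mz]
        have hc : ContinuousAt (fun δ : ℝ => (n : ℝ) ^ (-(1 + δ))) 0 := by
          refine ContinuousAt.rpow continuousAt_const (by fun_prop) (Or.inl (by linarith))
        refine ContinuousAt.sub (by fun_prop) (ContinuousAt.sub (ContinuousAt.neg (ContinuousAt.log (continuousAt_const.sub hc) ?_)) hc)
        have := prime_inv_le h
        simp only [add_zero, Real.rpow_neg_one]
        rw [← one_div]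
        linarith
      have e : tA 0 n = 0 := by
        simp [tA, h, mz, mw, Real.rpow_neg_one]
      rw [e] at this
      exact this.mono_left nhdsWithin_le_nhds
    · simp [tA, h]
  · filter_upwards [self_mem_nhdsWithin] with δ hδ n
    exact tA_bound hδ n

lemma tB_nonneg {δ : ℝ} (hδ : 0 < δ) (n : ℕ) : 0 ≤ tB δ n := by
  unfold tB
  split_ifs with h
  · have hn : (0 : ℝ) < n := by exact_mod_cast h.pos
    have := exp_eb_le n h.one_le hδ
    rw [neg_add, Real.rpow_add hn, Real.rpow_neg_one, ← one_div, ← mul_sub]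
    exact mul_nonneg (by positivity) (by linarith)
  · rfl

lemma tB_le {δ : ℝ} (hδ : 0 < δ) (n : ℕ) : tB δ n ≤ δ * mz (1 + δ) n := by
  unfold tB mz
  split_ifs with h
  · have hn : (0 : ℝ) < n := by exact_mod_cast h.pos
    have h1 := le_exp_eb n h.one_le hδ
    have hu := neg_log_lower ((prime_rpow_le h (s := 1 + δ) (by linarith)).trans (prime_inv_le h))
    refine le_trans ?_ (mul_le_mul_of_nonneg_left hu hδ.le)
    rw [neg_add, Real.rpow_add hn, Real.rpow_neg_one, ← one_div]
    have : 0 ≤ 1 / (n : ℝ) * (Real.exp (-δ * eb n) - (n : ℝ) ^ (-δ) * (1 - δ)) :=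
      mul_nonneg (by positivity) (by linarith)
    linarith
  · simp

lemma tB_tendsto : Tendsto (fun δ => ∑' n, tB δ n) (𝓝[>] 0) (𝓝 0) := by
  refine tendsto_of_tendsto_of_tendsto_of_le_of_le' tendsto_const_nhds delta_log_zr ?_ ?_
  · filter_upwards [self_mem_nhdsWithin] with δ hδ
    exact tsum_nonneg (tB_nonneg hδ)
  · filter_upwards [self_mem_nhdsWithin] with δ hδ
    have hδ' : (0 : ℝ) < δ := hδ
    rw [zr_eq (by linarith), Real.log_exp, ← tsum_mul_left]
    have hs := (mz_summable (s := 1 + δ) (by linarith)).mul_left δ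
    exact (Summable.of_nonneg_of_le (tB_nonneg hδ) (tB_le hδ) hs).tsum_le_tsum (tB_le hδ) hs

lemma mw_exp_tendsto : Tendsto (fun δ => ∑' n, mw n * Real.exp (-δ * eb n) +
    Real.log (1 - Real.exp (-δ))) (𝓝[>] 0) (𝓝 0) := by
  have h1 : Tendsto (fun δ : ℝ => (1 - Real.exp (-δ)) / δ) (𝓝[>] 0) (𝓝 1) := by
    have hd : HasDerivAt (fun δ : ℝ => -Real.exp (-δ)) 1 0 := by
      have := ((hasDerivAt_neg (0 : ℝ)).exp).fun_neg
      simpa using this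
    have := hd.tendsto_slope_zero_right
    refine this.congr fun δ => ?_
    simp
    ring
  have h2 := zr_tendsto.mul h1
  have h3 := (Real.continuousAt_log (x := 1 * 1) (by norm_num)).tendsto.comp h2
  rw [mul_one, Real.log_one] at h3
  have h4 := (h3.add tA_tendsto).sub tB_tendsto
  simp only [add_zero, sub_zero] at h4
  refine h4.congr' ?_
  filter_upwards [self_mem_nhdsWithin] with δ hδ
  have hδ' : (0 : ℝ) < δ := hδ
  have hz := zr_eq (s := 1 + δ) (by linarith)
  have hzp : 0 < zr (1 + δ) := by rw [hz]; exact Real.exp_pos _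
  have he : 0 < 1 - Real.exp (-δ) := by
    have : Real.exp (-δ) < 1 := by simpa using hδ'
    linarith
  simp only [Function.comp]
  rw [show δ * zr (1 + δ) * ((1 - Real.exp (-δ)) / δ) = zr (1 + δ) * (1 - Real.exp (-δ)) by field_simp]
  rw [Real.log_mul hzp.ne' he.ne', hz, Real.log_exp]
  have sz := (mz_summable (s := 1 + δ) (by linarith))
  have sB : Summable (tB δ) := Summable.of_nonneg_of_le (tB_nonneg hδ) (tB_le hδ) (sz.mul_left δ)
  have sA : Summable (tA δ) := Summable.of_norm_bounded
    ((Real.summable_one_div_nat_pow.mpr (by norm_num : 1 < 2)).mul_left 2) (tA_bound hδ)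
  have e : ∑' n, mw n * Real.exp (-δ * eb n) = ∑' n, mz (1 + δ) n + ∑' n, tA δ n - ∑' n, tB δ n := by
    rw [← sz.tsum_add sA, ← (sz.add sA).tsum_sub sB]
    exact tsum_congr fun n => tAB n
  rw [e]; ring

lemma ec_tendsto_zero : Tendsto (fun M => ∑ m ∈ Finset.range M, ec m) atTop (𝓝 0) := by
  obtain ⟨l, hl⟩ := ec_tendsto
  have h1 := Real.tendsto_tsum_powerSeries_nhdsWithin_lt hl
  have h2 : Tendsto (fun δ : ℝ => Real.exp (-δ)) (𝓝[>] 0) (𝓝[<] 1) := by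
    refine tendsto_nhdsWithin_of_tendsto_nhds_of_eventually_within _ ?_ ?_
    · have : Tendsto (fun δ : ℝ => Real.exp (-δ)) (𝓝 0) (𝓝 (Real.exp (-0))) :=
        (Real.continuous_exp.comp continuous_neg).tendsto 0
      rw [neg_zero, Real.exp_zero] at this
      exact this.mono_left nhdsWithin_le_nhds
    · filter_upwards [self_mem_nhdsWithin] with δ hδ
      have : (0 : ℝ) < δ := hδ
      simpa using this
  have h3 := (h2.mono_right nhdsWithin_le_nhds).mul (h1.comp h2)
  rw [one_mul] at h3
  have h4 : Tendsto (fun δ => ∑' n, mw n * Real.exp (-δ * eb n) +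
    Real.log (1 - Real.exp (-δ))) (𝓝[>] 0) (𝓝 l) := by
    refine h3.congr' ?_
    filter_upwards [self_mem_nhdsWithin] with δ hδ
    exact ec_abel hδ
  have := tendsto_nhds_unique mw_exp_tendsto h4
  rw [this]; exact hl

lemma eG_tendsto : Tendsto (fun M : ℕ => eG M - Real.log M) atTop (𝓝 Real.eulerMascheroniConstant) := by
  have h := ec_tendsto_zero.add Real.tendsto_harmonic_sub_log
  rw [zero_add] at h
  refine h.congr fun M => ?_
  rw [eG_eq]
  simp only [ec, Finset.sum_sub_distrib, harmonic]
  push_cast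
  simp only [one_div]
  ring

/-- sum of `mw` up to `z` -/
noncomputable def mP (z : ℝ) : ℝ := ∑ i ∈ Finset.range (⌊z⌋₊ + 1), mw i

lemma mP_mono : Monotone mP := by
  intro a b hab
  unfold mP
  refine Finset.sum_le_sum_of_subset_of_nonneg ?_ fun i _ _ => mw_nonneg i
  have := Nat.floor_mono hab
  exact Finset.range_mono (by omega)

lemma eG_eq_mP (m : ℕ) : eG m = mP (Real.exp m) := rfl

lemma mP_tendsto : Tendsto (fun z => mP z - Real.log (Real.log z)) atTop
    (𝓝 Real.eulerMascheroniConstant) := by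
  have hM : Tendsto (fun z : ℝ => ⌊Real.log z⌋₊) atTop atTop :=
    tendsto_nat_floor_atTop.comp Real.tendsto_log_atTop
  have hd : Tendsto (fun M : ℕ => Real.log ((M : ℝ) + 1) - Real.log M) atTop (𝓝 0) := by
    exact Real.tendsto_log_nat_add_one_sub_log
  have lo := (eG_tendsto.sub hd).comp hM
  have hi := ((eG_tendsto.comp (tendsto_add_atTop_nat 1)).add hd).comp hM
  rw [sub_zero] at lo
  rw [add_zero] at hi
  refine tendsto_of_tendsto_of_tendsto_of_le_of_le' lo hi ?_ ?_
  all_goals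
    filter_upwards [eventually_ge_atTop (Real.exp 1)] with z hz
    have hz0 : 0 < z := lt_of_lt_of_le (Real.exp_pos 1) hz
    have hl1 : 1 ≤ Real.log z := (Real.le_log_iff_exp_le hz0).mpr hz
    have hM1 : 1 ≤ ⌊Real.log z⌋₊ := Nat.le_floor (by simpa using hl1)
    have hM1' : (1 : ℝ) ≤ ⌊Real.log z⌋₊ := by exact_mod_cast hM1
    have ha : (⌊Real.log z⌋₊ : ℝ) ≤ Real.log z := Nat.floor_le (by linarith)
    have hb : Real.log z ≤ ⌊Real.log z⌋₊ + 1 := (Nat.lt_floor_add_one _).le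
    simp only [Function.comp, eG_eq_mP]
    push_cast
  · have h1 : mP (Real.exp ⌊Real.log z⌋₊) ≤ mP z :=
      mP_mono ((Real.le_log_iff_exp_le hz0).mp ha)
    have h2 : Real.log (Real.log z) ≤ Real.log ((⌊Real.log z⌋₊ : ℝ) + 1) :=
      Real.log_le_log (by linarith) hb
    linarith
  · have h1 : mP z ≤ mP (Real.exp (⌊Real.log z⌋₊ + 1)) :=
      mP_mono ((Real.log_le_iff_le_exp hz0).mp hb)
    have h2 : Real.log (⌊Real.log z⌋₊ : ℝ) ≤ Real.log (Real.log z) :=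
      Real.log_le_log (by linarith) ha
    linarith

noncomputable def mV (z : ℝ) : ℝ := ∏ p ∈ (Finset.range (⌊z⌋₊ + 1)).filter Nat.Prime, (1 - 1 / (p : ℝ))

lemma mV_eq (z : ℝ) : mV z = Real.exp (-mP z) := by
  unfold mV mP
  rw [← Finset.sum_neg_distrib, Real.exp_sum, Finset.prod_filter]
  refine Finset.prod_congr rfl fun p _ => ?_
  split_ifs with h
  · rw [mw_prime h, neg_neg, Real.exp_log]
    have := prime_inv_le h
    linarith
  · simp [mw, h]

theorem mertens_three : Tendsto (fun z => mV z * Real.log z) atTop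
    (𝓝 (Real.exp (-Real.eulerMascheroniConstant))) := by
  have h := (Real.continuous_exp.tendsto _).comp mP_tendsto.neg
  refine h.congr' ?_
  filter_upwards [eventually_gt_atTop (Real.exp 1)] with z hz
  have hz0 : 0 < z := lt_trans (Real.exp_pos 1) hz
  have hl1 : 1 < Real.log z := (Real.lt_log_iff_exp_lt hz0).mpr hz
  simp only [Function.comp]
  rw [neg_sub, sub_eq_add_neg, add_comm, Real.exp_add, Real.exp_log (by linarith), mV_eq]


lemma ordCompl_dvd_prod {r N M : ℕ} (hM : M ∣ N.factorial) (hc : Nat.Coprime r M) :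
    M ∣ ∏ j ∈ Finset.range N, (1 + r * (j + 1)) := by
  rcases Nat.eq_zero_or_pos M with rfl | hMpos
  · exact absurd (Nat.eq_zero_of_zero_dvd hM) (Nat.factorial_ne_zero N)
  obtain ⟨s, hs⟩ : ∃ s : ℕ, r * s ≡ 1 [MOD M] := by
    rcases Nat.lt_or_ge 1 M with h1 | h1
    · obtain ⟨s, _, hs⟩ := Nat.exists_mul_mod_eq_one_of_coprime hc h1
      exact ⟨s, by rw [Nat.ModEq, hs, Nat.mod_eq_of_lt h1]⟩
    · have : M = 1 := by omega
      subst this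
      exact ⟨0, Nat.modEq_one⟩
  have hsc : Nat.Coprime M (s ^ N) := by
    apply Nat.Coprime.pow_right
    have h1 : Nat.Coprime (r * s) M := by
      have := hs.gcd_eq
      rw [Nat.gcd_one_left] at this
      exact this
    exact (Nat.Coprime.coprime_mul_left h1).symm
  have h1 : s ^ N * ∏ j ∈ Finset.range N, (1 + r * (j + 1)) ≡ (s + 1).ascFactorial N [MOD M] := by
    rw [Nat.ascFactorial_eq_prod_range, ← Finset.card_range N, ← Finset.prod_const, Finset.card_range,
      ← Finset.prod_mul_distrib]
    apply Nat.ModEq.prod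
    intro j _
    have : s * (1 + r * (j + 1)) = s + (r * s) * (j + 1) := by ring
    rw [this]
    have h2 : s + (r * s) * (j + 1) ≡ s + 1 * (j + 1) [MOD M] := (hs.mul_right _).add_left _
    refine h2.trans ?_
    rw [show s + 1 * (j + 1) = s + 1 + j by ring]
  have h2 : M ∣ (s + 1).ascFactorial N := hM.trans (Nat.factorial_dvd_ascFactorial _ _)
  have h3 := (h1.dvd_iff (dvd_refl M)).mpr h2
  exact hsc.dvd_of_dvd_mul_left h3

lemma prod_primes_ap_le {r N : ℕ} (hr : r.Prime) (Q : Finset ℕ)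
    (hQ : ∀ q ∈ Q, q.Prime ∧ q % r = 1 ∧ N < q ∧ q ≤ r * N) :
    ∏ q ∈ Q, q ≤ (r + 1) ^ N * r ^ N := by
  have hf := Nat.factorial_ne_zero N
  set M := N.factorial / r ^ (N.factorial.factorization r) with hM
  have hMN : r ^ (N.factorial.factorization r) * M = N.factorial := Nat.ordProj_mul_ordCompl_eq_self _ _
  have hMpos : 0 < M := Nat.ordCompl_pos r hf
  have hMc : Nat.Coprime r M := Nat.coprime_ordCompl hr hf
  have hMd : M ∣ N.factorial := Nat.ordCompl_dvd _ _
  have h1 := ordCompl_dvd_prod hMd hMc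
  have h2 : ∏ q ∈ Q, q ∣ ∏ j ∈ Finset.range N, (1 + r * (j + 1)) := by
    apply Finset.prod_primes_dvd
    · intro q hq; exact (hQ q hq).1.prime
    · intro q hq
      obtain ⟨hqp, hqm, hqN, hqr⟩ := hQ q hq
      have h3 := Nat.div_add_mod q r
      rw [hqm] at h3
      have hle : q / r ≤ N := Nat.div_le_of_le_mul hqr
      generalize q / r = t at h3 hle
      rcases t with _ | t
      · have := hqp.two_le
        omega
      · have h4 : q = 1 + r * (t + 1) := by omega
        rw [h4]
        exact Finset.dvd_prod_of_mem (fun j => 1 + r * (j + 1)) (Finset.mem_range.mpr (by omega))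
  have h3 : Nat.Coprime (∏ q ∈ Q, q) M := by
    refine Nat.Coprime.coprime_dvd_right hMd ?_
    apply Nat.Coprime.prod_left
    intro q hq
    rw [Nat.Prime.coprime_iff_not_dvd (hQ q hq).1, Nat.Prime.dvd_factorial (hQ q hq).1]
    have := (hQ q hq).2.2.1
    omega
  have h4 := Nat.le_of_dvd (Finset.prod_pos fun j _ => by positivity) (h3.mul_dvd_of_dvd_of_dvd h2 h1)
  have h5 : ∏ j ∈ Finset.range N, (1 + r * (j + 1)) ≤ (r + 1) ^ N * N.factorial := by
    rw [← Finset.prod_range_add_one_eq_factorial, ← Finset.card_range N, ← Finset.prod_const,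
      Finset.card_range, ← Finset.prod_mul_distrib]
    refine Finset.prod_le_prod' fun j _ => ?_
    nlinarith
  have h6 : N.factorial.factorization r ≤ N := by
    have := hr
    have h7 := padicValNat_factorial_le_real (p := r) (n := N) hr
    rw [Nat.factorization_def _ hr]
    have h2 : (2 : ℝ) ≤ r := by exact_mod_cast hr.two_le
    have : (N : ℝ) / ((r : ℝ) - 1) ≤ N := div_le_self (by positivity) (by linarith)
    exact_mod_cast h7.trans this
  have h7 : (∏ q ∈ Q, q) * M ≤ ((r + 1) ^ N * r ^ N) * M := by
    calc _ ≤ (r + 1) ^ N * N.factorial := h4.trans h5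
      _ = (r + 1) ^ N * r ^ (N.factorial.factorization r) * M := by rw [mul_assoc, hMN]
      _ ≤ _ := by
        gcongr
        exact hr.one_le
  exact Nat.le_of_mul_le_mul_right h7 hMpos

lemma sum_log_primes_ap_le {r N : ℕ} (hr : r.Prime) (Q : Finset ℕ)
    (hQ : ∀ q ∈ Q, q.Prime ∧ q % r = 1 ∧ N < q ∧ q ≤ r * N) :
    ∑ q ∈ Q, Real.log q ≤ 3 * N * Real.log r := by
  have h := prod_primes_ap_le hr Q hQ
  have hr2 : (2 : ℝ) ≤ r := by exact_mod_cast hr.two_le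
  rw [← Real.log_prod (fun q hq => by have := (hQ q hq).1.pos; positivity)]
  have h' : (∏ q ∈ Q, (q : ℝ)) ≤ ((r : ℝ) + 1) ^ N * (r : ℝ) ^ N := by
    have h0 : ((∏ q ∈ Q, q : ℕ) : ℝ) ≤ (((r + 1) ^ N * r ^ N : ℕ) : ℝ) := Nat.cast_le.mpr h
    push_cast at h0
    exact h0
  have hpos : 0 < ∏ q ∈ Q, (q : ℝ) := Finset.prod_pos fun q hq => by
    have := (hQ q hq).1.pos; positivity
  have h3 := Real.log_le_log hpos h'
  rw [Real.log_mul (by positivity) (by positivity), Real.log_pow, Real.log_pow] at h3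
  have h4 : Real.log ((r : ℝ) + 1) ≤ 2 * Real.log r := by
    have : Real.log ((r : ℝ) + 1) ≤ Real.log ((r : ℝ) ^ 2) := Real.log_le_log (by linarith) (by nlinarith)
    rwa [Real.log_pow] at this
  have hN := N.cast_nonneg (α := ℝ)
  nlinarith

/-- reciprocal sum of primes `q ≤ n`, `q ≡ 1 mod r`. -/
noncomputable def apS (r n : ℕ) : ℝ :=
  ∑ q ∈ (Finset.range (n + 1)).filter (fun q => q.Prime ∧ q % r = 1), 1 / (q : ℝ)

lemma apS_mono (r : ℕ) {a b : ℕ} (h : a ≤ b) : apS r a ≤ apS r b := by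
  unfold apS
  refine Finset.sum_le_sum_of_subset_of_nonneg ?_ fun i _ _ => by positivity
  exact Finset.filter_subset_filter _ (Finset.range_mono (by omega))

lemma apS_dyadic {r Y : ℕ} (hr : r.Prime) (hY : r ≤ Y) :
    apS r (2 * Y) ≤ apS r Y + 9 * Real.log r / (r * Real.log Y) := by
  have hr2 := hr.two_le
  set Q := (Finset.Ico (Y + 1) (2 * Y + 1)).filter (fun q => q.Prime ∧ q % r = 1) with hQ
  have e : apS r (2 * Y) = apS r Y + ∑ q ∈ Q, 1 / (q : ℝ) := by
    unfold apS
    rw [hQ, ← Finset.sum_union]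
    · congr 1
      rw [← Finset.filter_union]
      congr 1
      rw [Finset.range_eq_Ico, Finset.range_eq_Ico, Finset.Ico_union_Ico_eq_Ico (by omega) (by omega)]
    · apply Finset.disjoint_filter_filter
      rw [Finset.range_eq_Ico]
      exact Finset.Ico_disjoint_Ico_consecutive _ _ _
  rw [e]
  gcongr
  set N := 2 * Y / r + 1 with hN
  have hNY : N ≤ Y + 1 := by
    have : 2 * Y / r ≤ Y := Nat.div_le_of_le_mul (by nlinarith)
    omega
  have hrY : 2 * Y < r * N := by
    rw [hN]; exact Nat.lt_mul_div_succ _ hr.pos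
  have hr2' : (2 : ℝ) ≤ r := by exact_mod_cast hr2
  have hY2 : (2 : ℝ) ≤ Y := by exact_mod_cast hr2.trans hY
  have hlY : 0 < Real.log Y := Real.log_pos (by linarith)
  have hlr : 0 < Real.log r := Real.log_pos (by linarith)
  have hrY' : (r : ℝ) ≤ Y := by exact_mod_cast hY
  by_cases hq1 : ∃ q ∈ Q, q ≤ N
  · -- then q = Y + 1 = N, so r = 2
    obtain ⟨q, hqQ, hqN⟩ := hq1
    rw [hQ, Finset.mem_filter, Finset.mem_Ico] at hqQ
    have h1 : 2 * Y / r = Y := by omega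
    have h2 : r = 2 := by
      have h3 := Nat.div_mul_le_self (2 * Y) r
      rw [h1] at h3
      have : r ≤ 2 := by
        by_contra! h
        nlinarith [hr.pos]
      omega
    -- use N' = Y
    have h3 := sum_log_primes_ap_le (N := Y) hr Q (fun q hq => by
      rw [hQ, Finset.mem_filter, Finset.mem_Ico] at hq
      exact ⟨hq.2.1, hq.2.2, by omega, by rw [h2]; omega⟩)
    have h4 : ∑ q ∈ Q, 1 / (q : ℝ) ≤ (∑ q ∈ Q, Real.log q) / (Y * Real.log Y) := by
      rw [Finset.sum_div]
      refine Finset.sum_le_sum fun q hq => ?_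
      rw [hQ, Finset.mem_filter, Finset.mem_Ico] at hq
      have hqY : (Y : ℝ) ≤ q := by exact_mod_cast (by omega : Y ≤ q)
      have := Real.log_le_log (by linarith) hqY
      rw [div_le_div_iff₀ (by linarith) (by positivity)]
      nlinarith
    refine h4.trans ?_
    rw [div_le_div_iff₀ (by positivity) (by positivity)]
    have hr22 : (r : ℝ) = 2 := by rw [h2]; norm_num
    calc _ ≤ (3 * Y * Real.log r) * (r * Real.log Y) := by gcongr
      _ ≤ _ := by
        rw [hr22]
        have : 0 ≤ Real.log 2 * (Y * Real.log Y) := by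
          have := Real.log_nonneg (x := 2) (by norm_num); positivity
        nlinarith
  · push Not at hq1
    have h3 := sum_log_primes_ap_le (N := N) hr Q (fun q hq => by
      have := hq1 q hq
      rw [hQ, Finset.mem_filter, Finset.mem_Ico] at hq
      exact ⟨hq.2.1, hq.2.2, this, by omega⟩)
    have h4 : ∑ q ∈ Q, 1 / (q : ℝ) ≤ (∑ q ∈ Q, Real.log q) / (Y * Real.log Y) := by
      rw [Finset.sum_div]
      refine Finset.sum_le_sum fun q hq => ?_
      rw [hQ, Finset.mem_filter, Finset.mem_Ico] at hq
      have hqY : (Y : ℝ) ≤ q := by exact_mod_cast (by omega : Y ≤ q)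
      have := Real.log_le_log (by linarith) hqY
      rw [div_le_div_iff₀ (by linarith) (by positivity)]
      nlinarith
    refine h4.trans ?_
    have hNr : (N : ℝ) * r ≤ 3 * Y := by
      have : N * r ≤ 3 * Y := by
        rw [hN, Nat.add_mul, one_mul]
        have := Nat.div_mul_le_self (2 * Y) r
        omega
      exact_mod_cast this
    rw [div_le_div_iff₀ (by positivity) (by positivity)]
    calc _ ≤ (3 * N * Real.log r) * (r * Real.log Y) := by gcongr
      _ = 3 * (N * r) * (Real.log r * Real.log Y) := by ring
      _ ≤ 3 * (3 * Y) * (Real.log r * Real.log Y) := by gcongr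
      _ = _ := by ring

lemma apS_small {r n : ℕ} (hr : r.Prime) (h : n < 2 * r) : apS r n ≤ 1 / r := by
  have hr2 := hr.two_le
  unfold apS
  have hsub : (Finset.range (n + 1)).filter (fun q => q.Prime ∧ q % r = 1) ⊆ {r + 1} := by
    intro q hq
    rw [Finset.mem_filter, Finset.mem_range] at hq
    rw [Finset.mem_singleton]
    obtain ⟨h1, hp, h2⟩ := hq
    have h3 := Nat.div_add_mod q r
    rw [h2] at h3
    have h4 : q / r < 2 := Nat.div_lt_of_lt_mul (by omega)
    have := hp.two_le
    interval_cases hqr : q / r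
    · omega
    · omega
  calc _ ≤ ∑ q ∈ {r + 1}, 1 / (q : ℝ) :=
        Finset.sum_le_sum_of_subset_of_nonneg hsub fun i _ _ => by positivity
    _ ≤ _ := by
      rw [Finset.sum_singleton]
      have : (2 : ℝ) ≤ r := by exact_mod_cast hr2
      push_cast
      exact one_div_le_one_div_of_le (by linarith) (by linarith)

lemma apS_pow {r : ℕ} (hr : r.Prime) (I : ℕ) :
    apS r (2 ^ I) ≤ Real.log r / r * (2 + 27 * harmonic I) := by
  have hr2 : (2 : ℝ) ≤ r := by exact_mod_cast hr.two_le
  have hl2 : (0.69 : ℝ) < Real.log 2 := by linarith [Real.log_two_gt_d9]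
  have hlr : Real.log 2 ≤ Real.log r := Real.log_le_log (by norm_num) hr2
  have hH : ∀ I, (0 : ℝ) ≤ harmonic I := fun I => by
    have : (0 : ℚ) ≤ harmonic I := by unfold harmonic; positivity
    exact_mod_cast this
  have hsmall : ∀ I, 1 / (r : ℝ) ≤ Real.log r / r * (2 + 27 * harmonic I) := by
    intro I
    rw [div_mul_eq_mul_div]
    gcongr
    have := hH I
    nlinarith
  induction I with
  | zero => exact (apS_small hr (by have := hr.two_le; omega)).trans (hsmall 0)
  | succ I ih =>
    by_cases h : 2 ^ I < r
    · exact (apS_small hr (by rw [pow_succ]; omega)).trans (hsmall _)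
    · push Not at h
      have hI : 1 ≤ I := by
        by_contra! h0
        have : I = 0 := by omega
        subst this
        have := hr.two_le
        omega
      have hI' : (1 : ℝ) ≤ I := by exact_mod_cast hI
      have h1 := apS_dyadic hr h
      rw [pow_succ, mul_comm]
      refine h1.trans ?_
      rw [harmonic_succ]
      push_cast
      rw [Real.log_pow]
      have : 9 * Real.log r / (r * (I * Real.log 2)) ≤ Real.log r / r * (27 * ((I : ℝ) + 1)⁻¹) := by
        rw [← div_eq_mul_inv, div_mul_div_comm, div_le_div_iff₀ (by positivity) (by positivity)]
        have : 9 * ((I : ℝ) + 1) ≤ 27 * (I * Real.log 2) := by nlinarith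
        have hp : 0 ≤ Real.log r * r := by nlinarith
        nlinarith
      linarith

theorem apS_upper {r n : ℕ} (hr : r.Prime) (hn : Real.exp 1 ≤ n) :
    apS r n ≤ 100 * (Real.log r / r) * (Real.log (Real.log n) + 1) := by
  have hn0 : (0 : ℝ) < n := lt_of_lt_of_le (Real.exp_pos 1) hn
  have hl1 : 1 ≤ Real.log n := (Real.le_log_iff_exp_le hn0).mpr hn
  set I := Nat.clog 2 n with hI
  have h1 : n ≤ 2 ^ I := Nat.le_pow_clog (by norm_num) n
  have h2 := (apS_mono r h1).trans (apS_pow hr I)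
  refine h2.trans ?_
  have hr2 : (2 : ℝ) ≤ r := by exact_mod_cast hr.two_le
  have hlr : 0 ≤ Real.log r := Real.log_nonneg (by linarith)
  have h3 : (I : ℝ) ≤ 3 * Real.log n := by
    have hn1 : 1 < n := by
      have : (1 : ℝ) < n := lt_of_lt_of_le (by have := Real.add_one_lt_exp (x := 1) one_ne_zero; linarith) hn
      exact_mod_cast this
    have h4 := Nat.pow_pred_clog_lt_self (b := 2) (by norm_num) hn1
    have hIpos : 0 < I := Nat.clog_pos (by norm_num) hn1
    have h5 : (2 : ℝ) ^ (I - 1) ≤ n := by exact_mod_cast h4.le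
    have h6 := Real.log_le_log (by positivity) h5
    rw [Real.log_pow, Nat.cast_sub hIpos] at h6
    push_cast at h6
    have hl2 : (0.69 : ℝ) < Real.log 2 := by linarith [Real.log_two_gt_d9]
    nlinarith
  have h4 : (harmonic I : ℝ) ≤ 3 + Real.log (Real.log n) := by
    have h5 := harmonic_le_one_add_log I
    rcases Nat.eq_zero_or_pos I with h0 | h0
    · rw [h0]; simp
      have := Real.log_nonneg hl1; linarith
    have h0' : (0 : ℝ) < I := by exact_mod_cast h0
    have h6 := Real.log_le_log h0' h3
    rw [Real.log_mul (by norm_num) (by linarith)] at h6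
    have h7 : Real.log 3 ≤ 2 := by
      have := Real.log_le_sub_one_of_pos (x := 3) (by norm_num); linarith
    linarith
  have hll := Real.log_nonneg hl1
  calc _ ≤ Real.log r / r * (2 + 27 * (3 + Real.log (Real.log n))) := by gcongr
    _ ≤ Real.log r / r * (100 * (Real.log (Real.log n) + 1)) := by gcongr; linarith
    _ = _ := by ring


lemma char_block_zero {p : ℕ} [Fact p.Prime] {χ : DirichletCharacter ℂ p} (hχ : χ ≠ 1) (m : ℕ) :
    ∑ i ∈ Finset.range p, χ ((m + i : ℕ) : ZMod p) = 0 := by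
  have h0 := MulChar.sum_eq_zero_of_ne_one hχ
  rw [← h0]
  refine Finset.sum_nbij' (fun i => ((m + i : ℕ) : ZMod p)) (fun a => (a - (m : ZMod p)).val)
    (fun _ _ => Finset.mem_univ _) (fun a _ => Finset.mem_range.mpr (ZMod.val_lt _)) ?_ ?_ ?_
  · intro i hi
    rw [Nat.cast_add, add_sub_cancel_left, ZMod.val_natCast_of_lt (Finset.mem_range.mp hi)]
  · intro a _
    rw [Nat.cast_add, ZMod.natCast_zmod_val]
    ring
  · intro i _; rfl

lemma char_sum_bound {p : ℕ} [Fact p.Prime] {χ : DirichletCharacter ℂ p} (hχ : χ ≠ 1) (m k : ℕ) :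
    ‖∑ i ∈ Finset.range k, χ ((m + i : ℕ) : ZMod p)‖ ≤ p := by
  have hp := (Fact.out : p.Prime)
  induction k using Nat.strong_induction_on generalizing m with
  | _ k ih =>
    rcases Nat.lt_or_ge k p with h | h
    · calc _ ≤ ∑ i ∈ Finset.range k, (1 : ℝ) :=
            norm_sum_le_of_le _ fun i _ => DirichletCharacter.norm_le_one χ _
        _ ≤ p := by simp; exact_mod_cast h.le
    · obtain ⟨j, rfl⟩ := Nat.exists_eq_add_of_le h
      rw [Finset.sum_range_add, char_block_zero hχ, zero_add]
      have := ih j (by have := hp.pos; omega) (m + p)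
      simpa only [add_assoc] using this

lemma abel_bound (a : ℕ → ℂ) (b : ℕ → ℝ) (B : ℝ) (ha : ∀ k, ‖∑ i ∈ Finset.range k, a i‖ ≤ B)
    (hb : Antitone b) (hb0 : ∀ i, 0 ≤ b i) (k : ℕ) :
    ‖∑ i ∈ Finset.range k, a i * (b i : ℂ)‖ ≤ B * b 0 := by
  have hB : 0 ≤ B := (norm_nonneg _).trans (ha 0)
  have e : ∀ k, ∑ i ∈ Finset.range k, a i * (b i : ℂ) = (∑ i ∈ Finset.range k, a i) * (b k : ℂ) +
      ∑ i ∈ Finset.range k, (∑ j ∈ Finset.range (i + 1), a j) * ((b i - b (i + 1) : ℝ) : ℂ) := by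
    intro k
    induction k with
    | zero => simp
    | succ k ih =>
      rw [Finset.sum_range_succ, ih, Finset.sum_range_succ _ k, Finset.sum_range_succ _ k]
      rw [Finset.sum_range_succ a k]
      push_cast
      ring
  rw [e]
  have h1 : ‖(∑ i ∈ Finset.range k, a i) * (b k : ℂ)‖ ≤ B * b k := by
    rw [norm_mul, Complex.norm_of_nonneg (hb0 k)]
    exact mul_le_mul_of_nonneg_right (ha k) (hb0 k)
  have h2 : ‖∑ i ∈ Finset.range k, (∑ j ∈ Finset.range (i + 1), a j) * ((b i - b (i + 1) : ℝ) : ℂ)‖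
      ≤ ∑ i ∈ Finset.range k, B * (b i - b (i + 1)) := by
    refine norm_sum_le_of_le _ fun i _ => ?_
    have h := sub_nonneg.mpr (hb (Nat.le_succ i))
    rw [norm_mul, Complex.norm_of_nonneg h]
    exact mul_le_mul_of_nonneg_right (ha _) h
  rw [← Finset.mul_sum, Finset.sum_range_sub'] at h2
  calc _ ≤ B * b k + B * (b 0 - b k) := (norm_add_le _ _).trans (add_le_add h1 h2)
    _ = _ := by ring

/-- L-series at real point -/
noncomputable def dL {p : ℕ} (χ : DirichletCharacter ℂ p) (s : ℝ) : ℂ :=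
  LSeries (fun n : ℕ => χ (n : ZMod p)) (s : ℂ)

lemma dL_term {p : ℕ} [Fact p.Prime] (χ : DirichletCharacter ℂ p) (s : ℝ) (n : ℕ) :
    LSeries.term (fun n : ℕ => χ (n : ZMod p)) (s : ℂ) n = χ (n : ZMod p) * (((n : ℝ) ^ (-s) : ℝ) : ℂ) := by
  rcases eq_or_ne n 0 with rfl | hn
  · rw [LSeries.term_zero, Nat.cast_zero, MulChar.map_zero, zero_mul]
  · rw [LSeries.term_of_ne_zero hn, Real.rpow_neg (by positivity), div_eq_mul_inv,
      Complex.ofReal_inv, Complex.ofReal_cpow (by positivity), Complex.ofReal_natCast]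

lemma dL_tendsto {p : ℕ} [Fact p.Prime] (χ : DirichletCharacter ℂ p) {s : ℝ} (hs : 1 < s) :
    Tendsto (fun N : ℕ => ∑ n ∈ Finset.range N, χ (n : ZMod p) * (((n : ℝ) ^ (-s) : ℝ) : ℂ)) atTop
      (nhds (dL χ s)) := by
  have h := (DirichletCharacter.LSeriesSummable_of_one_lt_re χ (s := s) (by simpa using hs)).hasSum.tendsto_sum_nat
  unfold dL LSeries
  refine h.congr fun N => Finset.sum_congr rfl fun n _ => dL_term χ s n

lemma dL_bound {p : ℕ} [Fact p.Prime] {χ : DirichletCharacter ℂ p} (hχ : χ ≠ 1) {s : ℝ} (hs : 1 < s) :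
    ‖dL χ s‖ ≤ p := by
  have h := ((tendsto_add_atTop_iff_nat 1).mpr (dL_tendsto χ hs)).norm
  refine le_of_tendsto h (Eventually.of_forall fun N => ?_)
  rw [Finset.sum_range_succ', Nat.cast_zero, MulChar.map_zero, zero_mul, add_zero]
  have := abel_bound (fun i => χ ((1 + i : ℕ) : ZMod p)) (fun i => ((1 + i : ℕ) : ℝ) ^ (-s)) p
    (fun k => char_sum_bound hχ 1 k) ?_ (fun i => by positivity) N
  · simp only [add_comm 1] at this
    simpa using this
  · intro i j hij
    refine Real.rpow_le_rpow_of_nonpos (by positivity) ?_ (by linarith)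
    exact_mod_cast (by omega : 1 + i ≤ 1 + j)

lemma rpow_diff_antitone {s σ : ℝ} (hs : 1 ≤ s) (hσ : s ≤ σ) :
    AntitoneOn (fun x : ℝ => x ^ (-s) - x ^ (-σ)) (Set.Ici 3) := by
  have hd : ∀ x : ℝ, 3 ≤ x → HasDerivAt (fun x : ℝ => x ^ (-s) - x ^ (-σ))
      (-s * x ^ (-s - 1) - -σ * x ^ (-σ - 1)) x := fun x hx =>
    (Real.hasDerivAt_rpow_const (Or.inl (by linarith))).sub
      (Real.hasDerivAt_rpow_const (Or.inl (by linarith)))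
  apply antitoneOn_of_deriv_nonpos (convex_Ici 3)
  · intro x hx
    exact (hd x hx).continuousAt.continuousWithinAt
  · intro x hx
    rw [interior_Ici] at hx
    exact (hd x (le_of_lt hx)).differentiableAt.differentiableWithinAt
  · intro x hx
    rw [interior_Ici] at hx
    have hx3 : (3 : ℝ) < x := hx
    rw [(hd x hx3.le).deriv]
    have hx0 : 0 < x := by linarith
    have e : x ^ (-s - 1) = x ^ (-σ - 1) * x ^ (σ - s) := by
      rw [← Real.rpow_add hx0]; ring_nf
    have hl : 1 ≤ Real.log x := by
      rw [Real.le_log_iff_exp_le hx0]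
      exact (Real.exp_one_lt_d9.le.trans (by norm_num)).trans hx3.le
    have h1 : 1 + (σ - s) ≤ x ^ (σ - s) := by
      rw [Real.rpow_def_of_pos hx0]
      have := Real.add_one_le_exp (Real.log x * (σ - s))
      nlinarith
    have h2 : σ ≤ s * x ^ (σ - s) := by nlinarith
    rw [e]
    have := Real.rpow_pos_of_pos hx0 (-σ - 1)
    nlinarith

lemma rpow_diff_le {s σ x c : ℝ} (hs : 1 ≤ s) (hσ : s ≤ σ) (hx : 1 ≤ x) (hc : Real.log x ≤ c * x) :
    x ^ (-s) - x ^ (-σ) ≤ c * (σ - s) := by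
  have hx0 : 0 < x := by linarith
  have e : x ^ (-σ) = x ^ (-s) * x ^ (-(σ - s)) := by
    rw [← Real.rpow_add hx0]; ring_nf
  have h1 : 1 - Real.log x * (σ - s) ≤ x ^ (-(σ - s)) := by
    rw [Real.rpow_def_of_pos hx0]
    have := Real.add_one_le_exp (Real.log x * (-(σ - s)))
    nlinarith
  have h2 : x ^ (-s) ≤ x⁻¹ := by
    rw [← Real.rpow_neg_one]
    exact Real.rpow_le_rpow_of_exponent_le hx (by linarith)
  have h3 : 0 < x ^ (-s) := Real.rpow_pos_of_pos hx0 _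
  have hl := Real.log_nonneg hx
  have h4 : 0 ≤ Real.log x * (σ - s) := by nlinarith
  calc _ ≤ x ^ (-s) * (Real.log x * (σ - s)) := by rw [e]; nlinarith
    _ ≤ x⁻¹ * (c * x * (σ - s)) := by
      gcongr
    _ = _ := by field_simp

lemma lip_partial {p : ℕ} [Fact p.Prime] {χ : DirichletCharacter ℂ p} (hχ : χ ≠ 1) {s σ : ℝ}
    (hs : 1 ≤ s) (hσ : s ≤ σ) (N : ℕ) :
    ‖∑ n ∈ Finset.range (3 + N), χ (n : ZMod p) * (((n : ℝ) ^ (-s) - (n : ℝ) ^ (-σ) : ℝ) : ℂ)‖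
      ≤ (p + 1) * (σ - s) := by
  rw [Finset.sum_range_add]
  have h1 : ‖∑ n ∈ Finset.range 3, χ (n : ZMod p) * (((n : ℝ) ^ (-s) - (n : ℝ) ^ (-σ) : ℝ) : ℂ)‖ ≤ σ - s := by
    rw [Finset.sum_range_succ, Finset.sum_range_succ, Finset.sum_range_one]
    simp only [Nat.cast_zero, Nat.cast_one, Real.one_rpow, sub_self, Complex.ofReal_zero, mul_zero,
      add_zero, MulChar.map_zero, zero_mul, zero_add]
    rw [norm_mul]
    have hnn : (0 : ℝ) ≤ ((2 : ℕ) : ℝ) ^ (-s) - ((2 : ℕ) : ℝ) ^ (-σ) :=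
      sub_nonneg.mpr (Real.rpow_le_rpow_of_exponent_le (by norm_num) (by linarith))
    rw [Complex.norm_of_nonneg hnn]
    have h2 := rpow_diff_le (x := ((2 : ℕ) : ℝ)) (c := 1) hs hσ (by norm_num)
      (by have := Real.log_le_sub_one_of_pos (x := ((2 : ℕ) : ℝ)) (by norm_num); linarith)
    have h3 := DirichletCharacter.norm_le_one χ ((2 : ℕ) : ZMod p)
    have := norm_nonneg (χ ((2 : ℕ) : ZMod p))
    nlinarith
  have h2 := abel_bound (fun i => χ ((3 + i : ℕ) : ZMod p))
    (fun i => ((3 + i : ℕ) : ℝ) ^ (-s) - ((3 + i : ℕ) : ℝ) ^ (-σ)) p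
    (fun k => char_sum_bound hχ 3 k) ?_ ?_ N
  · have h3 := rpow_diff_le (x := ((3 : ℕ) : ℝ)) (c := 1) hs hσ (by norm_num)
      (by have := Real.log_le_sub_one_of_pos (x := ((3 : ℕ) : ℝ)) (by norm_num); linarith)
    have h4 : (p : ℝ) * (((3 + 0 : ℕ) : ℝ) ^ (-s) - ((3 + 0 : ℕ) : ℝ) ^ (-σ)) ≤ p * (1 * (σ - s)) :=
      mul_le_mul_of_nonneg_left h3 (by positivity)
    calc _ ≤ _ := norm_add_le _ _
      _ ≤ (σ - s) + p * (1 * (σ - s)) := add_le_add h1 (h2.trans h4)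
      _ = _ := by ring
  · intro i j hij
    refine rpow_diff_antitone hs hσ ?_ ?_ ?_
    · simp
    · simp
    · exact_mod_cast (by omega : 3 + i ≤ 3 + j)
  · intro i
    refine sub_nonneg.mpr (Real.rpow_le_rpow_of_exponent_le ?_ (by linarith))
    exact_mod_cast (by omega : 1 ≤ 3 + i)

lemma dL_lip {p : ℕ} [Fact p.Prime] {χ : DirichletCharacter ℂ p} (hχ : χ ≠ 1) {s σ : ℝ}
    (hs : 1 < s) (hσ : s ≤ σ) : ‖dL χ s - dL χ σ‖ ≤ (p + 1) * (σ - s) := by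
  have h := (((dL_tendsto χ hs).sub (dL_tendsto χ (hs.trans_le hσ))).comp
    (tendsto_add_atTop_nat 3)).norm
  refine le_of_tendsto h (Eventually.of_forall fun N => ?_)
  have := lip_partial hχ hs.le hσ N
  simp only [Function.comp_apply]
  rw [← Finset.sum_sub_distrib, add_comm N 3]
  simpa only [Complex.ofReal_sub, mul_sub] using this


lemma geom_ge {r : ℝ} (n : ℕ) :
    (n : ℝ) * r ^ (n - 1) ≤ ∑ i ∈ Finset.range n, (r ^ 2) ^ i := by
  have h1 := Finset.sum_range_reflect (fun i => (r ^ 2) ^ i) n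
  have h2 : ∑ i ∈ Finset.range n, (2 * r ^ (n - 1)) ≤
      ∑ i ∈ Finset.range n, ((r ^ 2) ^ i + (r ^ 2) ^ (n - 1 - i)) := by
    refine Finset.sum_le_sum fun i hi => ?_
    have hi' := Finset.mem_range.mp hi
    have e : r ^ (n - 1) = r ^ i * r ^ (n - 1 - i) := by
      rw [← pow_add]; congr 1; omega
    rw [e, ← pow_mul, ← pow_mul, mul_comm 2 i, mul_comm 2 (n - 1 - i), pow_mul, pow_mul]
    nlinarith [sq_nonneg (r ^ i - r ^ (n - 1 - i))]
  rw [Finset.sum_add_distrib, h1, Finset.sum_const, Finset.card_range, nsmul_eq_mul] at h2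
  linarith

/-- Monsky's auxiliary sequence -/
noncomputable def monb (t : ℝ) (n : ℕ) : ℝ := 1 / (n * (1 - t)) - t ^ n / (1 - t ^ n)

lemma monb_one {t : ℝ} (h1 : t < 1) : monb t 1 = 1 := by
  have : 1 - t ≠ 0 := by linarith
  unfold monb
  rw [Nat.cast_one, one_mul, pow_one, ← sub_div, div_self this]

lemma monb_anti {t : ℝ} (h0 : 0 < t) (h1 : t < 1) (n : ℕ) (hn : 1 ≤ n) : monb t (n + 1) ≤ monb t n := by
  obtain ⟨r, hr0, rfl⟩ : ∃ r : ℝ, 0 < r ∧ t = r ^ 2 :=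
    ⟨Real.sqrt t, Real.sqrt_pos.mpr h0, (Real.sq_sqrt h0.le).symm⟩
  have hr1 : r < 1 := by nlinarith
  have g1 := geom_ge (r := r) n
  have g2 := geom_ge (r := r) (n + 1)
  have e1 := mul_neg_geom_sum (r ^ 2) n
  have e2 := mul_neg_geom_sum (r ^ 2) (n + 1)
  set G1 := ∑ i ∈ Finset.range n, (r ^ 2) ^ i
  set G2 := ∑ i ∈ Finset.range (n + 1), (r ^ 2) ^ i
  have hu : 0 < 1 - r ^ 2 := by linarith
  have hnR : (0 : ℝ) < n := by exact_mod_cast hn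
  have hG1 : 0 < G1 := lt_of_lt_of_le (by positivity) g1
  have hG2 : 0 < G2 := lt_of_lt_of_le (by positivity) g2
  have key : (n : ℝ) * (n + 1) * (r ^ 2) ^ n ≤ G1 * G2 := by
    calc (n : ℝ) * (n + 1) * (r ^ 2) ^ n ≤ (n : ℝ) * (n + 1) * (r ^ (n - 1) * r ^ n) := by
          gcongr
          rw [← pow_mul, ← pow_add]
          exact pow_le_pow_of_le_one hr0.le hr1.le (by omega)
      _ = (n * r ^ (n - 1)) * (((n + 1 : ℕ) : ℝ) * r ^ (n + 1 - 1)) := by push_cast; ring_nf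
      _ ≤ _ := by gcongr
  have hd : (r ^ 2) ^ n / (1 - (r ^ 2) ^ n) - (r ^ 2) ^ (n + 1) / (1 - (r ^ 2) ^ (n + 1)) =
      (r ^ 2) ^ n / ((1 - r ^ 2) * (G1 * G2)) := by
    rw [← e1, ← e2, div_sub_div _ _ (by positivity) (by positivity), div_eq_div_iff (by positivity) (by positivity)]
    have : (r ^ 2) ^ n * ((1 - r ^ 2) * G2) - (1 - r ^ 2) * G1 * (r ^ 2) ^ (n + 1) = (r ^ 2) ^ n * (1 - r ^ 2) := by
      rw [e2, e1]; ring
    rw [this]; ring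
  have hd2 : 1 / ((n : ℝ) * (1 - r ^ 2)) - 1 / (((n + 1 : ℕ) : ℝ) * (1 - r ^ 2)) =
      1 / ((1 - r ^ 2) * (n * (n + 1))) := by
    push_cast
    field_simp
    ring
  have : (r ^ 2) ^ n / ((1 - r ^ 2) * (G1 * G2)) ≤ 1 / ((1 - r ^ 2) * (n * (n + 1))) := by
    rw [div_le_div_iff₀ (by positivity) (by positivity)]
    nlinarith
  unfold monb
  linarith

lemma monb_nonneg {t : ℝ} (h0 : 0 < t) (h1 : t < 1) (n : ℕ) (hn : 1 ≤ n) : 0 ≤ monb t n := by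
  have e1 := mul_neg_geom_sum t n
  have hnR : (0 : ℝ) < n := by exact_mod_cast hn
  have hu : 0 < 1 - t := by linarith
  have hlt : t ^ n < 1 := pow_lt_one₀ h0.le h1 (by omega)
  have : (n : ℝ) * t ^ n ≤ ∑ i ∈ Finset.range n, t ^ i := by
    have : ∑ i ∈ Finset.range n, t ^ n ≤ ∑ i ∈ Finset.range n, t ^ i :=
      Finset.sum_le_sum fun i hi => pow_le_pow_of_le_one h0.le h1.le (Finset.mem_range.mp hi).le
    simpa using this
  unfold monb
  rw [sub_nonneg, div_le_div_iff₀ (by linarith) (by positivity), ← e1]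
  nlinarith

lemma lambert_one {t : ℝ} (h0 : 0 < t) (h1 : t < 1) (n : ℕ) :
    HasSum (fun m : ℕ => if n + 1 ∣ m ∧ m ≠ 0 then t ^ m else 0) (t ^ (n + 1) / (1 - t ^ (n + 1))) := by
  have hlt : t ^ (n + 1) < 1 := pow_lt_one₀ h0.le h1 (by omega)
  have hg := (hasSum_geometric_of_lt_one (by positivity) hlt).mul_left (t ^ (n + 1))
  rw [← div_eq_mul_inv] at hg
  have hinj : Function.Injective (fun k : ℕ => (n + 1) * (k + 1)) := by
    intro a b h
    have := Nat.eq_of_mul_eq_mul_left (by omega) h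
    omega
  rw [← hinj.hasSum_iff]
  · refine Eq.mp (congrArg (fun f : ℕ → ℝ => HasSum f (t ^ (n + 1) / (1 - t ^ (n + 1)))) (funext fun k => ?_)) hg
    symm
    rw [Function.comp_apply, if_pos ⟨dvd_mul_right _ _, by positivity⟩, ← pow_mul, ← pow_add]
    ring_nf
  · intro m hm
    rw [if_neg]
    rintro ⟨⟨k, rfl⟩, h⟩
    rcases k with _ | k
    · simp at h
    · exact hm ⟨k, rfl⟩

lemma lambert_tendsto {p : ℕ} [Fact p.Prime] (χ : DirichletCharacter ℂ p) {t : ℝ} (h0 : 0 < t) (h1 : t < 1) :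
    Summable (fun m : ℕ => χ.zetaMul m * ((t ^ m : ℝ) : ℂ)) ∧
    Tendsto (fun N : ℕ => ∑ n ∈ Finset.range N, χ ((n + 1 : ℕ) : ZMod p) *
      ((t ^ (n + 1) / (1 - t ^ (n + 1)) : ℝ) : ℂ)) atTop
      (nhds (∑' m : ℕ, χ.zetaMul m * ((t ^ m : ℝ) : ℂ))) := by
  have hz : ∀ m, χ.zetaMul m = ∑ d ∈ m.divisors, χ (d : ZMod p) := by
    intro m
    rw [DirichletCharacter.zetaMul, ArithmeticFunction.coe_zeta_mul_apply]
    refine Finset.sum_congr rfl fun d hd => ?_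
    have : d ≠ 0 := (Nat.pos_of_mem_divisors hd).ne'
    simp [toArithmeticFunction, this]
  have hsum : Summable (fun m : ℕ => (m : ℝ) * t ^ m) := by
    have := summable_pow_mul_geometric_of_norm_lt_one 1 (r := t) (by rw [Real.norm_of_nonneg h0.le]; exact h1)
    simpa using this
  have hb : ∀ (S : Finset ℕ) (m : ℕ), S ⊆ m.divisors →
      ‖(∑ d ∈ S, χ (d : ZMod p)) * ((t ^ m : ℝ) : ℂ)‖ ≤ m * t ^ m := by
    intro S m hS
    rw [norm_mul, Complex.norm_of_nonneg (by positivity)]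
    gcongr
    calc _ ≤ ∑ d ∈ S, (1 : ℝ) := norm_sum_le_of_le _ fun i _ => DirichletCharacter.norm_le_one χ _
      _ = (S.card : ℝ) := by simp
      _ ≤ m := by exact_mod_cast (Finset.card_le_card hS).trans (Nat.card_divisors_le_self m)
  refine ⟨Summable.of_norm_bounded hsum fun m => by rw [hz]; exact hb _ m subset_rfl, ?_⟩
  set c : ℕ → ℕ → ℂ := fun N m =>
    (∑ d ∈ m.divisors.filter (fun d => d ≤ N), χ (d : ZMod p)) * ((t ^ m : ℝ) : ℂ) with hc
  have e : ∀ N, ∑ n ∈ Finset.range N, χ ((n + 1 : ℕ) : ZMod p) *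
      ((t ^ (n + 1) / (1 - t ^ (n + 1)) : ℝ) : ℂ) = ∑' m, c N m := by
    intro N
    have hs : HasSum (fun m => ∑ n ∈ Finset.range N, χ ((n + 1 : ℕ) : ZMod p) *
        ((if n + 1 ∣ m ∧ m ≠ 0 then t ^ m else 0 : ℝ) : ℂ))
        (∑ n ∈ Finset.range N, χ ((n + 1 : ℕ) : ZMod p) * ((t ^ (n + 1) / (1 - t ^ (n + 1)) : ℝ) : ℂ)) :=
      hasSum_sum fun n _ => (Complex.hasSum_ofReal.mpr (lambert_one h0 h1 n)).mul_left _
    rw [← hs.tsum_eq]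
    refine tsum_congr fun m => ?_
    rw [hc]
    simp only
    rw [Finset.sum_mul]
    have : m.divisors.filter (fun d => d ≤ N) =
        ((Finset.range N).filter (fun n => n + 1 ∣ m ∧ m ≠ 0)).image (fun n => n + 1) := by
      ext d
      simp only [Finset.mem_filter, Nat.mem_divisors, Finset.mem_image, Finset.mem_range]
      constructor
      · rintro ⟨⟨h2, h3⟩, h4⟩
        have : d ≠ 0 := by rintro rfl; exact h3 (Nat.eq_zero_of_zero_dvd h2)
        exact ⟨d - 1, ⟨by omega, by rwa [Nat.sub_add_cancel (by omega)], h3⟩, by omega⟩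
      · rintro ⟨a, ⟨h2, h3, h4⟩, rfl⟩
        exact ⟨⟨h3, h4⟩, by omega⟩
    rw [this, Finset.sum_image (by intro a _ b _ h; simpa using h), Finset.sum_filter]
    refine Finset.sum_congr rfl fun n _ => ?_
    split_ifs <;> simp
  simp_rw [e]
  refine tendsto_tsum_of_dominated_convergence hsum ?_ ?_
  · intro m
    refine tendsto_const_nhds.congr' ?_
    filter_upwards [eventually_ge_atTop m] with N hN
    rw [hz, hc]
    simp only
    congr 2
    rw [Finset.filter_true_of_mem]
    intro d hd
    exact (Nat.divisor_le hd).trans hN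
  · exact Eventually.of_forall fun N m => hb _ m (Finset.filter_subset _ _)

lemma zetaMul_sq {p : ℕ} {χ : DirichletCharacter ℂ p} (hχ : χ ^ 2 = 1) {m : ℕ} (hm : m ≠ 0) :
    ∃ x : ℝ, 1 ≤ x ∧ χ.zetaMul (m ^ 2) = x := by
  rw [χ.isMultiplicative_zetaMul.multiplicative_factorization _ (pow_ne_zero 2 hm), Finsupp.prod]
  apply Finset.prod_induction _ (fun z : ℂ => ∃ x : ℝ, 1 ≤ x ∧ z = x)
  · rintro a b ⟨x, hx, rfl⟩ ⟨y, hy, rfl⟩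
    exact ⟨x * y, by nlinarith, by push_cast; rfl⟩
  · exact ⟨1, le_rfl, by simp⟩
  · intro q hq
    have hqp : q.Prime := Nat.prime_of_mem_primeFactors hq
    rw [Nat.factorization_pow]
    simp only [Finsupp.smul_apply, smul_eq_mul]
    set k := m.factorization q
    have hv : χ.zetaMul (q ^ (2 * k)) = ∑ i ∈ Finset.range (2 * k + 1), χ (q : ZMod p) ^ i := by
      rw [DirichletCharacter.zetaMul, ArithmeticFunction.coe_zeta_mul_apply, Nat.sum_divisors_prime_pow hqp]
      refine Finset.sum_congr rfl fun i _ => ?_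
      have : q ^ i ≠ 0 := pow_ne_zero _ hqp.ne_zero
      simp [toArithmeticFunction, hqp.ne_zero]
    rw [hv]
    rcases MulChar.isQuadratic_iff_sq_eq_one.mpr hχ (q : ZMod p) with h | h | h
    · refine ⟨1, le_rfl, ?_⟩
      rw [h, Finset.sum_range_succ']
      simp
    · refine ⟨2 * k + 1, by linarith [k.cast_nonneg (α := ℝ)], ?_⟩
      rw [h]; simp
    · refine ⟨1, le_rfl, ?_⟩
      rw [h, neg_one_geom_sum, if_neg (by simp)]
      simp

lemma lambert_ge {p : ℕ} [Fact p.Prime] {χ : DirichletCharacter ℂ p} (hχ : χ ^ 2 = 1) {K : ℕ} (hK : 1 ≤ K) :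
    (K : ℝ) / 2 ≤ ‖∑' m : ℕ, χ.zetaMul m * (((1 - 1 / (2 * (K : ℝ) ^ 2)) ^ m : ℝ) : ℂ)‖ := by
  have hK1 : (1 : ℝ) ≤ K := by exact_mod_cast hK
  have hu : 1 / (2 * (K : ℝ) ^ 2) ≤ 1 / 2 := by
    apply one_div_le_one_div_of_le (by norm_num); nlinarith
  have hu0 : 0 < 1 / (2 * (K : ℝ) ^ 2) := by positivity
  have hu1 : 1 / (2 * (K : ℝ) ^ 2) * (K : ℝ) ^ 2 = 1 / 2 := by field_simp
  generalize 1 / (2 * (K : ℝ) ^ 2) = u at hu hu0 hu1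
  have hsum := (lambert_tendsto χ (t := 1 - u) (by linarith) (by linarith)).1
  refine le_trans ?_ (Complex.re_le_norm _)
  rw [Complex.re_tsum hsum]
  have hre : ∀ m, 0 ≤ (χ.zetaMul m * (((1 - u) ^ m : ℝ) : ℂ)).re := by
    intro m
    have h := (Complex.le_def.mp (DirichletCharacter.zetaMul_nonneg hχ m)).1
    rw [Complex.re_mul_ofReal]
    have : 0 ≤ (1 - u) ^ m := pow_nonneg (by linarith) _
    exact mul_nonneg h this
  have h1 := (Complex.hasSum_re hsum.hasSum).summable.sum_le_tsum
    ((Finset.range K).image (fun i => (i + 1) ^ 2)) (fun m _ => hre m)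
  refine le_trans ?_ h1
  rw [Finset.sum_image]
  · calc (K : ℝ) / 2 = ∑ i ∈ Finset.range K, (1 / 2 : ℝ) := by simp; ring
      _ ≤ _ := by
        refine Finset.sum_le_sum fun i hi => ?_
        have hi' := Finset.mem_range.mp hi
        obtain ⟨x, hx, hxe⟩ := zetaMul_sq hχ (m := i + 1) (by omega)
        rw [hxe, Complex.re_mul_ofReal, Complex.ofReal_re]
        have hb := one_add_mul_le_pow (a := -u) (by linarith) ((i + 1) ^ 2)
        have hi2 : (((i + 1) ^ 2 : ℕ) : ℝ) ≤ (K : ℝ) ^ 2 := by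
          exact_mod_cast Nat.pow_le_pow_left (by omega : i + 1 ≤ K) 2
        have h3 : (1 / 2 : ℝ) ≤ (1 - u) ^ ((i + 1) ^ 2) := by
          rw [← sub_eq_add_neg] at hb
          nlinarith
        nlinarith
  · intro a _ b _ h
    have := Nat.pow_left_injective (n := 2) (by norm_num) h
    omega

lemma dL_quad {p : ℕ} [Fact p.Prime] {χ : DirichletCharacter ℂ p} (hχ : χ ≠ 1) (hχ2 : χ ^ 2 = 1)
    {s : ℝ} (hs : 1 < s) : 1 / (32 * (p : ℝ)) - (p + 1) * (s - 1) ≤ ‖dL χ s‖ := by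
  have hp := (Fact.out : p.Prime)
  have hp2 : (2 : ℝ) ≤ p := by exact_mod_cast hp.two_le
  have hF := lambert_ge hχ2 (K := 4 * p) (by have := hp.pos; omega)
  have hu1 : 1 / (2 * ((4 * p : ℕ) : ℝ) ^ 2) * (32 * (p : ℝ)) * p = 1 := by push_cast; field_simp; norm_num
  have hu0 : 0 < 1 / (2 * ((4 * p : ℕ) : ℝ) ^ 2) := by push_cast; positivity
  generalize 1 / (2 * ((4 * p : ℕ) : ℝ) ^ 2) = u at hu1 hu0 hF
  have hul : u < 1 := by
    by_contra! h
    have : 1 * (32 * 2) * 2 ≤ u * (32 * (p : ℝ)) * p := by gcongr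
    linarith
  have hT := (lambert_tendsto χ (t := 1 - u) (by linarith) (by linarith)).2
  set F := ∑' m : ℕ, χ.zetaMul m * (((1 - u) ^ m : ℝ) : ℂ)
  have hD := (tendsto_add_atTop_iff_nat 1).mpr (dL_tendsto χ hs)
  have hlim : ‖F‖ ≤ p + (‖dL χ s‖ + (p + 1) * (s - 1)) / u := by
    refine le_of_tendsto_of_tendsto hT.norm
      (((hD.norm.add_const ((p + 1 : ℝ) * (s - 1))).div_const u).const_add (p : ℝ)) ?_
    filter_upwards [eventually_ge_atTop 2] with N hN
    have hL := lip_partial hχ le_rfl hs.le (N - 2)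
    rw [show 3 + (N - 2) = N + 1 by omega, Finset.sum_range_succ', Nat.cast_zero, MulChar.map_zero,
      zero_mul, add_zero] at hL
    rw [Finset.sum_range_succ' _ N, Nat.cast_zero, MulChar.map_zero, zero_mul, add_zero]
    have hM := abel_bound (fun i => χ ((1 + i : ℕ) : ZMod p)) (fun i => monb (1 - u) (1 + i)) p
      (fun k => char_sum_bound hχ 1 k)
      (antitone_nat_of_succ_le fun n => monb_anti (by linarith) (by linarith) (1 + n) (by omega))
      (fun i => monb_nonneg (by linarith) (by linarith) _ (by omega)) N
    simp only [add_zero] at hM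
    rw [monb_one (by linarith), mul_one] at hM
    set A := ∑ n ∈ Finset.range N, χ ((n + 1 : ℕ) : ZMod p) * ((((n + 1 : ℕ) : ℝ) ^ (-1 : ℝ) : ℝ) : ℂ) with hA
    set B := ∑ n ∈ Finset.range N, χ ((n + 1 : ℕ) : ZMod p) * ((((n + 1 : ℕ) : ℝ) ^ (-s) : ℝ) : ℂ) with hB
    set FN := ∑ n ∈ Finset.range N, χ ((n + 1 : ℕ) : ZMod p) *
      (((1 - u) ^ (n + 1) / (1 - (1 - u) ^ (n + 1)) : ℝ) : ℂ) with hFN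
    have e1 : ∑ i ∈ Finset.range N, χ ((1 + i : ℕ) : ZMod p) * ((monb (1 - u) (1 + i) : ℝ) : ℂ)
        = A / (u : ℂ) - FN := by
      rw [hA, hFN, Finset.sum_div, ← Finset.sum_sub_distrib]
      refine Finset.sum_congr rfl fun i _ => ?_
      rw [add_comm 1 i, mul_div_assoc, ← Complex.ofReal_div, ← mul_sub, ← Complex.ofReal_sub]
      congr 3
      rw [Real.rpow_neg_one]
      unfold monb
      rw [sub_sub_cancel, one_div, mul_inv, div_eq_mul_inv _ u]
    have e2 : ∑ n ∈ Finset.range N, χ ((n + 1 : ℕ) : ZMod p) *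
        ((((n + 1 : ℕ) : ℝ) ^ (-1 : ℝ) - ((n + 1 : ℕ) : ℝ) ^ (-s) : ℝ) : ℂ) = A - B := by
      rw [hA, hB, ← Finset.sum_sub_distrib]
      refine Finset.sum_congr rfl fun i _ => ?_
      rw [← mul_sub, ← Complex.ofReal_sub]
    rw [e1] at hM
    rw [e2] at hL
    have h3 : ‖FN‖ ≤ p + ‖A / (u : ℂ)‖ := by
      have := norm_sub_norm_le FN (A / (u : ℂ))
      rw [norm_sub_rev] at this
      linarith
    rw [norm_div, Complex.norm_of_nonneg hu0.le] at h3
    refine h3.trans ?_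
    gcongr
    have := norm_sub_norm_le A B
    linarith
  have h4 : (2 : ℝ) * p ≤ p + (‖dL χ s‖ + (p + 1) * (s - 1)) / u := by
    refine le_trans ?_ (hF.trans hlim)
    push_cast; linarith
  have h5 : (p : ℝ) * u ≤ ‖dL χ s‖ + (p + 1) * (s - 1) := by
    rw [← le_div_iff₀ hu0]; linarith
  have h6 : 1 / (32 * (p : ℝ)) = p * u := by
    rw [div_eq_iff (by positivity)]; linarith
  linarith


lemma norm_dL_one {p : ℕ} [Fact p.Prime] {s : ℝ} (hs : 1 < s) :
    ‖dL (1 : DirichletCharacter ℂ p) s‖ = (1 - (p : ℝ) ^ (-s)) * zr s := by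
  have hp := (Fact.out : p.Prime)
  have hs' : 1 < (s : ℂ).re := by simpa using hs
  have h1 := DirichletCharacter.LFunction_eq_LSeries (1 : DirichletCharacter ℂ p) hs'
  have h2 := DirichletCharacter.LFunctionTrivChar_eq_mul_riemannZeta (N := p) (s := (s : ℂ))
    (by intro h; rw [h] at hs'; simp at hs')
  rw [DirichletCharacter.LFunctionTrivChar, h1, hp.primeFactors, Finset.prod_singleton,
    zeta_eq_tsum_one_div_nat_cpow hs'] at h2
  have e1 : ∑' n : ℕ, 1 / (n : ℂ) ^ (s : ℂ) = ((zr s : ℝ) : ℂ) := by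
    unfold zr
    rw [Complex.ofReal_tsum]
    refine tsum_congr fun n => ?_
    push_cast [Complex.ofReal_cpow (Nat.cast_nonneg n)]
    rfl
  have hle := (prime_rpow_le hp hs.le).trans (prime_inv_le hp)
  have hz : 0 ≤ zr s := tsum_nonneg fun n => by positivity
  have e2 : (1 - (p : ℂ) ^ (-(s : ℂ))) = ((1 - (p : ℝ) ^ (-s) : ℝ) : ℂ) := by
    push_cast [Complex.ofReal_cpow (Nat.cast_nonneg p)]
    rfl
  rw [e1, e2, ← Complex.ofReal_mul] at h2
  unfold dL
  rw [h2, Complex.norm_of_nonneg]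
  apply mul_nonneg _ hz
  linarith

lemma zr_bounds : ∃ d : ℝ, 0 < d ∧ ∀ δ, 0 < δ → δ < d → 1 / 2 ≤ δ * zr (1 + δ) ∧ δ * zr (1 + δ) ≤ 2 := by
  have h := zr_tendsto.eventually (Ioo_mem_nhds (show (1 / 2 : ℝ) < 1 by norm_num) (show (1 : ℝ) < 2 by norm_num))
  rw [eventually_nhdsWithin_iff, Metric.eventually_nhds_iff] at h
  obtain ⟨d, hd, h⟩ := h
  refine ⟨d, hd, fun δ h0 h1 => ?_⟩
  have := h (y := δ) (by rw [Real.dist_eq, sub_zero, abs_of_pos h0]; exact h1) h0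
  exact ⟨this.1.le, this.2.le⟩

lemma dL_lower : ∃ A : ℝ, 1 ≤ A ∧ ∀ (p : ℕ) [Fact p.Prime] (δ : ℝ), 0 < δ → δ * (A * (p : ℝ) ^ 5) ≤ 1 →
    1 / 4 ≤ δ * ‖dL (1 : DirichletCharacter ℂ p) (1 + δ)‖ ∧
    ∀ χ : DirichletCharacter ℂ p, χ ≠ 1 → 1 / (A * (p : ℝ) ^ 4) ≤ ‖dL χ (1 + δ)‖ := by
  obtain ⟨d, hd, hz⟩ := zr_bounds
  set A := 2048 + 1 / d with hA
  have hA0 : 2048 < A := by have : 0 < 1 / d := by positivity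
                            linarith
  have hAd : 1 / A < d := by
    rw [div_lt_comm₀ (by linarith) hd]; linarith
  refine ⟨A, by linarith, fun p _ δ hδ hδA => ?_⟩
  have hp := (Fact.out : p.Prime)
  have hp2 : (2 : ℝ) ≤ p := by exact_mod_cast hp.two_le
  have hA00 : 0 < A := by linarith
  set η := 1 / (A * (p : ℝ) ^ 5) with hη
  have hη0 : 0 < η := by positivity
  have hp5 : (1 : ℝ) ≤ (p : ℝ) ^ 5 := one_le_pow₀ (by linarith)
  have hp3 : (1 : ℝ) ≤ (p : ℝ) ^ 3 := one_le_pow₀ (by linarith)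
  have hηd : η < d := by
    refine lt_of_le_of_lt ?_ hAd
    rw [hη]
    apply one_div_le_one_div_of_le hA00
    nlinarith
  have hδη : δ ≤ η := by
    rw [hη, le_div_iff₀ (by positivity)]; exact hδA
  have hps : ∀ δ : ℝ, 0 < δ → (p : ℝ) ^ (-(1 + δ)) ≤ 1 / 2 := fun δ h =>
    (prime_rpow_le hp (by linarith)).trans (prime_inv_le hp)
  refine ⟨?_, ?_⟩
  · rw [norm_dL_one (by linarith)]
    have h1 := (hz δ hδ (by linarith)).1
    have h2 := hps δ hδ
    have h3 : 0 < δ * zr (1 + δ) := by linarith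
    calc (1 / 4 : ℝ) ≤ (1 / 2) * (δ * zr (1 + δ)) := by linarith
      _ ≤ (1 - (p : ℝ) ^ (-(1 + δ))) * (δ * zr (1 + δ)) := by gcongr; linarith
      _ = _ := by ring
  · intro χ hχ
    have hlipc : ((p : ℝ) + 1) * η ≤ 2 / (A * (p : ℝ) ^ 4) := by
      rw [hη, mul_one_div, div_le_div_iff₀ (by positivity) (by positivity)]
      have : ((p : ℝ) + 1) ≤ 2 * p := by linarith
      calc ((p : ℝ) + 1) * (A * (p : ℝ) ^ 4) ≤ (2 * p) * (A * (p : ℝ) ^ 4) := by gcongr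
        _ = _ := by ring
    by_cases h2 : χ ^ 2 = 1
    · have h := dL_quad hχ h2 (s := 1 + δ) (by linarith)
      rw [add_sub_cancel_left] at h
      have h3 : ((p : ℝ) + 1) * δ ≤ ((p : ℝ) + 1) * η := by gcongr
      have h4 : 3 / (A * (p : ℝ) ^ 4) ≤ 1 / (32 * (p : ℝ)) := by
        rw [div_le_div_iff₀ (by positivity) (by positivity)]
        have : 96 ≤ A * (p : ℝ) ^ 3 := by nlinarith
        calc 3 * (32 * (p : ℝ)) = 96 * p := by ring
          _ ≤ (A * (p : ℝ) ^ 3) * p := by gcongr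
          _ = _ := by ring
      have e : 3 / (A * (p : ℝ) ^ 4) = 2 / (A * (p : ℝ) ^ 4) + 1 / (A * (p : ℝ) ^ 4) := by ring
      linarith
    · have h := DirichletCharacter.norm_LSeries_product_ge_one χ hη0 0
      have e1 : (1 + (η : ℂ)) = ((1 + η : ℝ) : ℂ) := by push_cast; rfl
      simp only [Complex.ofReal_zero, mul_zero, add_zero] at h
      rw [e1] at h
      change ‖dL (1 : DirichletCharacter ℂ p) (1 + η) ^ 3 * dL χ (1 + η) ^ 4 * dL (χ ^ 2) (1 + η)‖ ≥ 1 at h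
      rw [norm_mul, norm_mul, norm_pow, norm_pow] at h
      have b1 : ‖dL (1 : DirichletCharacter ℂ p) (1 + η)‖ ≤ 2 / η := by
        rw [norm_dL_one (by linarith)]
        have h5 := (hz η hη0 hηd).2
        have h6 := hps η hη0
        have h7 : 0 ≤ (p : ℝ) ^ (-(1 + η)) := by positivity
        have h8 : 0 ≤ zr (1 + η) := tsum_nonneg fun n => by positivity
        rw [le_div_iff₀ hη0]
        nlinarith
      have b2 := dL_bound h2 (s := 1 + η) (by linarith)
      have b3 : 4 / (A * (p : ℝ) ^ 4) ≤ ‖dL χ (1 + η)‖ := by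
        by_contra! hlt
        have : ‖dL (1 : DirichletCharacter ℂ p) (1 + η)‖ ^ 3 * ‖dL χ (1 + η)‖ ^ 4 * ‖dL (χ ^ 2) (1 + η)‖ ≤
            (2 / η) ^ 3 * (4 / (A * (p : ℝ) ^ 4)) ^ 4 * p := by gcongr
        have e : (2 / η) ^ 3 * (4 / (A * (p : ℝ) ^ 4)) ^ 4 * p = 2048 / A := by
          rw [hη]; field_simp; norm_num
        have : 2048 / A < 1 := by rw [div_lt_one hA00]; exact hA0
        linarith
      have b4 := dL_lip hχ (s := 1 + δ) (σ := 1 + η) (by linarith) (by linarith)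
      have b5 := norm_sub_norm_le (dL χ (1 + η)) (dL χ (1 + δ))
      rw [norm_sub_rev] at b5
      have b6 : ((p : ℝ) + 1) * (1 + η - (1 + δ)) ≤ ((p : ℝ) + 1) * η := by gcongr; linarith
      have e : 4 / (A * (p : ℝ) ^ 4) = 2 / (A * (p : ℝ) ^ 4) + 2 / (A * (p : ℝ) ^ 4) := by ring
      have e' : 1 / (A * (p : ℝ) ^ 4) ≤ 2 / (A * (p : ℝ) ^ 4) := by gcongr; norm_num
      linarith

/-- tsum over primes `≡ 1` -/
noncomputable def apT (p : ℕ) (s : ℝ) : ℝ :=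
  ∑' q : Nat.Primes, if ((q : ℕ) : ZMod p) = 1 then ((q : ℕ) : ℝ) ^ (-s) else 0

noncomputable def pZ : ℝ := ∑' q : Nat.Primes, ((q : ℕ) : ℝ) ^ (-(2 : ℝ))

lemma log_norm_dL_le {p : ℕ} [Fact p.Prime] (χ : DirichletCharacter ℂ p) {s : ℝ} (hs : 1 < s) :
    Real.log ‖dL χ s‖ ≤ ∑' q : Nat.Primes, (χ ((q : ℕ) : ZMod p)).re * ((q : ℕ) : ℝ) ^ (-s) + pZ := by
  have hs' : 1 < (s : ℂ).re := by simpa using hs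
  have h1 := DirichletCharacter.LSeries_eulerProduct_exp_log χ hs'
  have hsm := DirichletCharacter.summable_neg_log_one_sub_mul_prime_cpow χ hs'
  have hS1 : Summable (fun q : Nat.Primes => ((q : ℕ) : ℝ) ^ (-s)) := Nat.Primes.summable_rpow.mpr (by linarith)
  have hS2 : Summable (fun q : Nat.Primes => ((q : ℕ) : ℝ) ^ (-(2 : ℝ))) := Nat.Primes.summable_rpow.mpr (by norm_num)
  have hS3 : Summable (fun q : Nat.Primes => (χ ((q : ℕ) : ZMod p)).re * ((q : ℕ) : ℝ) ^ (-s)) := by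
    refine Summable.of_norm_bounded hS1 fun q => ?_
    rw [norm_mul, Real.norm_of_nonneg (by positivity : (0 : ℝ) ≤ ((q : ℕ) : ℝ) ^ (-s))]
    refine mul_le_of_le_one_left (by positivity) ?_
    exact (Complex.abs_re_le_norm _).trans (DirichletCharacter.norm_le_one χ _)
  have h2 : Real.log ‖dL χ s‖ = ∑' q : Nat.Primes,
      (-Complex.log (1 - χ ((q : ℕ) : ZMod p) * ((q : ℕ) : ℂ) ^ (-(s : ℂ)))).re := by
    unfold dL
    rw [← h1, Complex.norm_exp, Real.log_exp, Complex.re_tsum hsm]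
  rw [h2, pZ, ← hS3.tsum_add hS2]
  refine Summable.tsum_le_tsum (fun q => ?_) (Complex.hasSum_re hsm.hasSum).summable (hS3.add hS2)
  have hq := q.2
  have hle := (prime_rpow_le hq hs.le).trans (prime_inv_le hq)
  have e : χ ((q : ℕ) : ZMod p) * ((q : ℕ) : ℂ) ^ (-(s : ℂ)) =
      χ ((q : ℕ) : ZMod p) * ((((q : ℕ) : ℝ) ^ (-s) : ℝ) : ℂ) := by
    push_cast [Complex.ofReal_cpow (Nat.cast_nonneg (q : ℕ))]
    rfl
  rw [e]
  set w := χ ((q : ℕ) : ZMod p) * ((((q : ℕ) : ℝ) ^ (-s) : ℝ) : ℂ) with hw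
  have hwn : ‖w‖ ≤ ((q : ℕ) : ℝ) ^ (-s) := by
    rw [hw, norm_mul, Complex.norm_of_nonneg (by positivity)]
    exact mul_le_of_le_one_left (by positivity) (DirichletCharacter.norm_le_one χ _)
  have hw2 : ‖w‖ ≤ 1 / 2 := hwn.trans hle
  have h3 := Complex.norm_log_one_add_sub_self_le (z := -w) (by rw [norm_neg]; linarith)
  rw [norm_neg, ← sub_eq_add_neg] at h3
  have h4 := (Complex.abs_re_le_norm _).trans h3
  have h5 : ‖w‖ ^ 2 * (1 - ‖w‖)⁻¹ / 2 ≤ ‖w‖ ^ 2 := by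
    have : (1 - ‖w‖)⁻¹ ≤ 2 := by
      rw [inv_le_comm₀ (by linarith) (by norm_num)]; linarith
    nlinarith [sq_nonneg ‖w‖]
  have h6 : ‖w‖ ^ 2 ≤ ((q : ℕ) : ℝ) ^ (-(2 : ℝ)) := by
    calc ‖w‖ ^ 2 ≤ (((q : ℕ) : ℝ) ^ (-s)) ^ 2 := by gcongr
      _ = ((q : ℕ) : ℝ) ^ (-s * 2) := by
        rw [Real.rpow_mul (by positivity)]; norm_num
      _ ≤ _ := Real.rpow_le_rpow_of_exponent_le (by exact_mod_cast hq.one_le) (by linarith)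
  have h7 := neg_abs_le (Complex.log (1 - w) - -w).re
  have h8 : w.re = (χ ((q : ℕ) : ZMod p)).re * ((q : ℕ) : ℝ) ^ (-s) := by
    rw [hw, Complex.re_mul_ofReal]
  rw [Complex.sub_re, Complex.neg_re] at h7
  rw [Complex.sub_re, Complex.neg_re] at h4
  rw [Complex.neg_re, ← h8]
  linarith

lemma sum_log_norm_dL_le {p : ℕ} [Fact p.Prime] {s : ℝ} (hs : 1 < s) :
    ∑ χ : DirichletCharacter ℂ p, Real.log ‖dL χ s‖ ≤ ((p : ℝ) - 1) * (apT p s + pZ) := by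
  have hp := (Fact.out : p.Prime)
  have hS1 : Summable (fun q : Nat.Primes => ((q : ℕ) : ℝ) ^ (-s)) := Nat.Primes.summable_rpow.mpr (by linarith)
  have hS3 : ∀ χ : DirichletCharacter ℂ p, Summable (fun q : Nat.Primes => (χ ((q : ℕ) : ZMod p)).re * ((q : ℕ) : ℝ) ^ (-s)) := by
    intro χ
    refine Summable.of_norm_bounded hS1 fun q => ?_
    rw [norm_mul, Real.norm_of_nonneg (by positivity : (0 : ℝ) ≤ ((q : ℕ) : ℝ) ^ (-s))]
    refine mul_le_of_le_one_left (by positivity) ?_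
    exact (Complex.abs_re_le_norm _).trans (DirichletCharacter.norm_le_one χ _)
  have htot : (p.totient : ℝ) = (p : ℝ) - 1 := by
    rw [Nat.totient_prime hp, Nat.cast_sub hp.one_le, Nat.cast_one]
  have hcard : (Fintype.card (DirichletCharacter ℂ p) : ℝ) = (p : ℝ) - 1 := by
    rw [← htot, ← DirichletCharacter.card_eq_totient_of_hasEnoughRootsOfUnity ℂ p, Nat.card_eq_fintype_card]
  calc _ ≤ ∑ χ : DirichletCharacter ℂ p,
        (∑' q : Nat.Primes, (χ ((q : ℕ) : ZMod p)).re * ((q : ℕ) : ℝ) ^ (-s) + pZ) :=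
      Finset.sum_le_sum fun χ _ => log_norm_dL_le χ hs
    _ = ∑' q : Nat.Primes, ∑ χ : DirichletCharacter ℂ p, (χ ((q : ℕ) : ZMod p)).re * ((q : ℕ) : ℝ) ^ (-s)
        + ((p : ℝ) - 1) * pZ := by
      rw [Finset.sum_add_distrib, Finset.sum_const, nsmul_eq_mul, Finset.card_univ, hcard,
        Summable.tsum_finsetSum fun χ _ => hS3 χ]
    _ = ((p : ℝ) - 1) * apT p s + ((p : ℝ) - 1) * pZ := by
      congr 1
      rw [apT, ← tsum_mul_left]
      refine tsum_congr fun q => ?_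
      rw [← Finset.sum_mul, ← Complex.re_sum, DirichletCharacter.sum_characters_eq]
      split_ifs
      · rw [Complex.natCast_re, htot]
      · simp
    _ = _ := by ring

lemma rpow_tail {δ : ℝ} (hδ : 0 < δ) {M : ℕ} (hM : 1 ≤ M) (X : ℕ) :
    ∑ n ∈ Finset.range X, ((M + n + 1 : ℕ) : ℝ) ^ (-(1 + δ)) ≤ (M : ℝ) ^ (-δ) / δ := by
  have h : ∀ n ∈ Finset.range X, ((M + n + 1 : ℕ) : ℝ) ^ (-(1 + δ)) ≤
      ((M + n : ℕ) : ℝ) ^ (-δ) / δ - ((M + (n + 1) : ℕ) : ℝ) ^ (-δ) / δ := by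
    intro n _
    set m := M + n with hm
    have hm1 : (1 : ℝ) ≤ m := by exact_mod_cast (by omega : 1 ≤ m)
    rw [← add_assoc, ← hm, ← sub_div, le_div_iff₀ hδ]
    push_cast
    have hm0 : (0 : ℝ) < m := by linarith
    have e1 : ((m : ℝ) + 1) ^ (-(1 + δ)) = ((m : ℝ) + 1) ^ (-δ) / ((m : ℝ) + 1) := by
      rw [neg_add, Real.rpow_add (by linarith), Real.rpow_neg_one, div_eq_mul_inv, mul_comm]
    have e2 : (m : ℝ) ^ (-δ) = ((m : ℝ) + 1) ^ (-δ) * ((m : ℝ) / (m + 1)) ^ (-δ) := by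
      rw [← Real.mul_rpow (by positivity) (by positivity)]
      congr 1
      field_simp
    have h1 : 1 + δ / (m + 1) ≤ ((m : ℝ) / (m + 1)) ^ (-δ) := by
      rw [Real.rpow_def_of_pos (by positivity)]
      have hl := Real.log_le_sub_one_of_pos (x := (m : ℝ) / (m + 1)) (by positivity)
      have : (m : ℝ) / (m + 1) - 1 = - (1 / (m + 1)) := by field_simp; ring
      have h2 := Real.add_one_le_exp (Real.log ((m : ℝ) / (m + 1)) * -δ)
      have : δ / ((m : ℝ) + 1) = (1 / ((m : ℝ) + 1)) * δ := by ring
      nlinarith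
    rw [e1, e2]
    have h3 : 0 < ((m : ℝ) + 1) ^ (-δ) := by positivity
    have : ((m : ℝ) + 1) ^ (-δ) / ((m : ℝ) + 1) * δ = ((m : ℝ) + 1) ^ (-δ) * (δ / (m + 1)) := by ring
    rw [this]
    nlinarith
  refine (Finset.sum_le_sum h).trans ?_
  rw [Finset.sum_range_sub' (fun n => ((M + n : ℕ) : ℝ) ^ (-δ) / δ) X]
  have : 0 ≤ ((M + X : ℕ) : ℝ) ^ (-δ) / δ := by positivity
  simp only [add_zero]
  linarith

lemma apT_le {p : ℕ} (hp : p.Prime) {δ : ℝ} (hδ : 0 < δ) {M : ℕ} (hM : 1 ≤ M) :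
    apT p (1 + δ) ≤ apS p M + (M : ℝ) ^ (-δ) / δ := by
  have hnn : ∀ q : Nat.Primes, (0 : ℝ) ≤ (if ((q : ℕ) : ZMod p) = 1 then ((q : ℕ) : ℝ) ^ (-(1 + δ)) else 0) := by
    intro q; split_ifs <;> positivity
  unfold apT
  apply Real.tsum_le_of_sum_le hnn
  intro S
  obtain ⟨X, hX⟩ : ∃ X, ∀ q ∈ S, (q : ℕ) < M + 1 + X := by
    refine ⟨S.sup (fun q => (q : ℕ)), fun q hq => ?_⟩
    have := Finset.le_sup (f := fun q : Nat.Primes => (q : ℕ)) hq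
    omega
  have hinj : Set.InjOn (fun q : Nat.Primes => (q : ℕ)) S := fun a _ b _ h => Subtype.ext h
  set g : ℕ → ℝ := fun q => if q.Prime ∧ q % p = 1 then (q : ℝ) ^ (-(1 + δ)) else 0 with hg
  have hmod : ∀ q : ℕ, ((q : ℕ) : ZMod p) = 1 ↔ q % p = 1 := by
    intro q
    have : ((1 : ℕ) : ZMod p) = 1 := Nat.cast_one
    rw [← this, ZMod.natCast_eq_natCast_iff', Nat.mod_eq_of_lt hp.one_lt]
  have h1 : ∑ q ∈ S, (if ((q : ℕ) : ZMod p) = 1 then ((q : ℕ) : ℝ) ^ (-(1 + δ)) else 0) =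
      ∑ q ∈ S.image (fun q : Nat.Primes => (q : ℕ)), g q := by
    rw [Finset.sum_image hinj]
    refine Finset.sum_congr rfl fun q _ => ?_
    rw [hg]
    simp only [hmod, q.2, true_and]
  rw [h1]
  have hgn : ∀ q, 0 ≤ g q := by intro q; rw [hg]; simp only; split_ifs <;> positivity
  calc _ ≤ ∑ q ∈ Finset.range (M + 1 + X), g q := by
        refine Finset.sum_le_sum_of_subset_of_nonneg ?_ fun i _ _ => hgn i
        intro q hq
        obtain ⟨a, ha, rfl⟩ := Finset.mem_image.mp hq
        exact Finset.mem_range.mpr (hX a ha)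
    _ = ∑ q ∈ Finset.range (M + 1), g q + ∑ i ∈ Finset.range X, g (M + 1 + i) := Finset.sum_range_add _ _ _
    _ ≤ _ := by
      refine add_le_add ?_ ?_
      · unfold apS
        rw [Finset.sum_filter]
        refine Finset.sum_le_sum fun q _ => ?_
        rw [hg]
        simp only
        split_ifs with h
        · rw [one_div, ← Real.rpow_neg_one]
          exact Real.rpow_le_rpow_of_exponent_le (by exact_mod_cast h.1.one_le) (by linarith)
        · exact le_rfl
      · refine le_trans (Finset.sum_le_sum fun n _ => ?_) (rpow_tail hδ hM X)
        rw [hg]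
        simp only
        rw [show M + 1 + n = M + n + 1 by omega]
        split_ifs
        · exact le_rfl
        · positivity

lemma apS_lower_aux : ∃ A : ℝ, 1 ≤ A ∧ ∀ (p : ℕ) (δ : ℝ) (M : ℕ), p.Prime → 0 < δ → 1 ≤ M →
    δ * (A * (p : ℝ) ^ 5) ≤ 1 → Real.log (1 / δ) - Real.log 4 ≤
      ((p : ℝ) - 1) * (apS p M + (M : ℝ) ^ (-δ) / δ + pZ + Real.log A + 4 * Real.log p) := by
  obtain ⟨A, hA, h⟩ := dL_lower
  refine ⟨A, hA, fun p δ M hp hδ hM hδA => ?_⟩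
  haveI : Fact p.Prime := ⟨hp⟩
  obtain ⟨h1, h2⟩ := h p δ hδ hδA
  have h3 := sum_log_norm_dL_le (p := p) (s := 1 + δ) (by linarith)
  have h4 := apT_le hp hδ hM
  have hp2 : (2 : ℝ) ≤ p := by exact_mod_cast hp.two_le
  have hlA := Real.log_nonneg hA
  have hlp := Real.log_nonneg (x := (p : ℝ)) (by linarith)
  have h5 : Real.log (1 / δ) - Real.log 4 ≤ Real.log ‖dL (1 : DirichletCharacter ℂ p) (1 + δ)‖ := by
    rw [← Real.log_div (by positivity) (by norm_num)]
    apply Real.log_le_log (by positivity)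
    rw [div_div, div_le_iff₀ (by positivity)]
    linarith
  have htot : (p.totient : ℝ) = (p : ℝ) - 1 := by
    rw [Nat.totient_prime hp, Nat.cast_sub hp.one_le, Nat.cast_one]
  have hcard : (Fintype.card (DirichletCharacter ℂ p) : ℝ) = (p : ℝ) - 1 := by
    rw [← htot, ← DirichletCharacter.card_eq_totient_of_hasEnoughRootsOfUnity ℂ p, Nat.card_eq_fintype_card]
  classical
  have h6 : ∀ χ : DirichletCharacter ℂ p, (if χ = 1 then Real.log (1 / δ) - Real.log 4 else 0)
      - (Real.log A + 4 * Real.log p) ≤ Real.log ‖dL χ (1 + δ)‖ := by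
    intro χ
    split_ifs with hχ
    · rw [hχ]; linarith
    · have h7 := Real.log_le_log (by positivity) (h2 χ hχ)
      rw [one_div, Real.log_inv, Real.log_mul (by linarith) (by positivity), Real.log_pow] at h7
      push_cast at h7
      linarith
  have h8 := (Finset.sum_le_sum fun (χ : DirichletCharacter ℂ p) (_ : χ ∈ Finset.univ) => h6 χ).trans h3
  rw [Finset.sum_sub_distrib, Finset.sum_ite_eq' Finset.univ (1 : DirichletCharacter ℂ p), if_pos (Finset.mem_univ _),
    Finset.sum_const, nsmul_eq_mul, Finset.card_univ, hcard] at h8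
  have hp1 : 0 ≤ (p : ℝ) - 1 := by linarith
  have h9 := mul_le_mul_of_nonneg_left h4 hp1
  nlinarith

theorem apS_lower : ∃ C : ℝ, 0 < C ∧ ∃ M0 : ℕ, ∀ M : ℕ, M0 ≤ M → ∀ p : ℕ, p.Prime →
    (p : ℝ) ≤ Real.log (Real.log M) →
    Real.log (Real.log M) / (2 * p) - C * Real.log p ≤ apS p M := by
  obtain ⟨A, hA, h⟩ := apS_lower_aux
  have hlA := Real.log_nonneg hA
  have hZ : 0 ≤ pZ := tsum_nonneg fun q => by positivity
  have hLL : Tendsto (fun M : ℕ => Real.log (Real.log (M : ℝ))) atTop atTop :=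
    Real.tendsto_log_atTop.comp (Real.tendsto_log_atTop.comp tendsto_natCast_atTop_atTop)
  have ev1 : ∀ᶠ u : ℝ in atTop, Real.log (2 * u) + Real.log 4 ≤ u / 2 := by
    have h1 := (Real.isLittleO_log_id_atTop.bound (show (0 : ℝ) < 1 / 4 by norm_num))
    filter_upwards [h1, eventually_ge_atTop (4 * (Real.log 2 + Real.log 4)), eventually_ge_atTop 1] with u hu hu2 hu3
    rw [Real.log_mul (by norm_num) (by linarith)]
    have := (le_abs_self _).trans hu
    rw [id, Real.norm_of_nonneg (by linarith)] at this
    linarith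
  have ev2 : ∀ᶠ u : ℝ in atTop, 2 * A * u ^ 6 ≤ Real.exp u := by
    have h1 := (isLittleO_pow_exp_atTop (n := 6)).bound (show (0 : ℝ) < 1 / (2 * A) by positivity)
    filter_upwards [h1, eventually_ge_atTop 0] with u hu hu0
    rw [Real.norm_of_nonneg (by positivity), Real.norm_of_nonneg (by positivity), one_div_mul_eq_div,
      le_div_iff₀ (by positivity)] at hu
    linarith
  have ev := hLL.eventually ((ev1.and ev2).and (eventually_ge_atTop 1))
  obtain ⟨M0, hM0⟩ := eventually_atTop.mp ev
  refine ⟨4 + 2 * (Real.log A + pZ + 1), by positivity, max M0 3, fun M hM p hp hpL => ?_⟩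
  obtain ⟨⟨h1, h2⟩, h3⟩ := hM0 M (le_of_max_le_left hM)
  have hM3 : 3 ≤ M := le_of_max_le_right hM
  set u := Real.log (Real.log M) with hu
  have hMR : (3 : ℝ) ≤ M := by exact_mod_cast hM3
  have hlM : 0 < Real.log M := Real.log_pos (by linarith)
  have hexp : Real.exp u = Real.log M := Real.exp_log hlM
  have hp2 : (2 : ℝ) ≤ p := by exact_mod_cast hp.two_le
  set δ := 2 * u / Real.log M with hδ
  have hδ0 : 0 < δ := by positivity
  have hδA : δ * (A * (p : ℝ) ^ 5) ≤ 1 := by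
    rw [hδ, div_mul_eq_mul_div, div_le_one hlM, ← hexp]
    calc 2 * u * (A * (p : ℝ) ^ 5) ≤ 2 * u * (A * u ^ 5) := by gcongr
      _ = 2 * A * u ^ 6 := by ring
      _ ≤ _ := h2
  have h4 := h p δ M hp hδ0 (by omega) hδA
  have h5 : (M : ℝ) ^ (-δ) / δ ≤ 1 := by
    rw [div_le_one hδ0, Real.rpow_def_of_pos (by linarith)]
    have : Real.log M * -δ = -(2 * u) := by rw [hδ]; field_simp
    rw [this, Real.exp_neg, two_mul, Real.exp_add, hexp, hδ]
    have hl1 : 1 ≤ Real.log M := by rw [← hexp]; exact Real.one_le_exp (by linarith)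
    rw [inv_le_comm₀ (by positivity) (by positivity), inv_div]
    rw [div_le_iff₀ (by positivity)]
    nlinarith [mul_pos hlM hlM]
  have h6 : u / 2 ≤ Real.log (1 / δ) - Real.log 4 := by
    rw [hδ, one_div_div, Real.log_div hlM.ne' (by positivity), ← hu]
    linarith
  have hp1 : 0 < (p : ℝ) - 1 := by linarith
  have h7 : u / 2 / ((p : ℝ) - 1) ≤ apS p M + 1 + pZ + Real.log A + 4 * Real.log p := by
    rw [div_le_iff₀ hp1]
    refine (h6.trans h4).trans ?_
    rw [mul_comm]
    gcongr
  have h8 : u / (2 * p) ≤ u / 2 / ((p : ℝ) - 1) := by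
    rw [div_div]
    apply div_le_div_of_nonneg_left (by linarith) (by linarith) (by linarith)
  have h9 : (1 / 2 : ℝ) ≤ Real.log p := by
    have := Real.log_le_log (by norm_num) hp2
    linarith [Real.log_two_gt_d9]
  nlinarith


lemma turan_count (Q : Finset ℕ) (hQ : ∀ q ∈ Q, q.Prime) (M : ℕ) :
    (((Finset.Ioc 0 M).filter (fun m => ∀ q ∈ Q, ¬ q ∣ m)).card : ℝ) * (∑ q ∈ Q, 1 / (q:ℝ))
      ≤ M + 2 * Q.card := by
  set E : ℝ := ∑ q ∈ Q, 1 / (q:ℝ) with hE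
  have hE0 : 0 ≤ E := Finset.sum_nonneg (fun q _ => by positivity)
  rcases hE0.eq_or_lt with h0 | hEpos
  · rw [← h0]; simp; positivity
  let w : ℕ → ℝ := fun m => ∑ q ∈ Q, if q ∣ m then (1:ℝ) else 0
  have hcard : ∀ d : ℕ, ∑ m ∈ Finset.Ioc 0 M, (if d ∣ m then (1:ℝ) else 0) = ((M / d : ℕ) : ℝ) := by
    intro d
    rw [Finset.sum_boole, Nat.Ioc_filter_dvd_card_eq_div]
  have h1 : (M:ℝ) * E - Q.card ≤ ∑ m ∈ Finset.Ioc 0 M, w m := by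
    simp only [w]
    rw [Finset.sum_comm]
    simp only [hcard]
    have : (M:ℝ) * E - Q.card = ∑ q ∈ Q, ((M:ℝ) * (1 / (q:ℝ)) - 1) := by
      rw [Finset.sum_sub_distrib, ← Finset.mul_sum]; simp [hE]
    rw [this]
    apply Finset.sum_le_sum
    intro q hq
    have := Nat.lt_floor_add_one ((M:ℝ) / (q:ℝ))
    rw [Nat.floor_div_natCast, Nat.floor_natCast] at this
    rw [mul_one_div]; linarith
  have h2 : ∑ m ∈ Finset.Ioc 0 M, (w m)^2 ≤ (M:ℝ) * E^2 + M * E := by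
    have e1 : ∀ m, (w m)^2 = ∑ q ∈ Q, ∑ q' ∈ Q, (if q ∣ m ∧ q' ∣ m then (1:ℝ) else 0) := by
      intro m
      simp only [w]
      rw [sq, Finset.sum_mul_sum]
      refine Finset.sum_congr rfl (fun q _ => Finset.sum_congr rfl (fun q' _ => ?_))
      by_cases a : q ∣ m <;> by_cases b : q' ∣ m <;> simp [a, b]
    simp only [e1]
    rw [Finset.sum_comm]
    have e2 : (M:ℝ) * E^2 + M * E = ∑ q ∈ Q, ∑ q' ∈ Q,
        ((M:ℝ) * ((1/(q:ℝ)) * (1/(q':ℝ))) + if q = q' then (M:ℝ) * (1/(q:ℝ)) else 0) := by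
      simp only [Finset.sum_add_distrib]
      congr 1
      · rw [sq, hE, Finset.sum_mul_sum, Finset.mul_sum]
        refine Finset.sum_congr rfl (fun q _ => ?_)
        rw [Finset.mul_sum]
      · rw [hE, Finset.mul_sum]
        refine Finset.sum_congr rfl (fun q hq => ?_)
        rw [Finset.sum_ite_eq Q q]; simp [hq]
    rw [e2]
    apply Finset.sum_le_sum
    intro q hq
    rw [Finset.sum_comm]
    apply Finset.sum_le_sum
    intro q' hq'
    by_cases hqq : q = q'
    · subst hqq
      simp only [and_self, if_true]
      rw [hcard]
      have : ((M / q : ℕ) : ℝ) ≤ (M:ℝ) / q := Nat.cast_div_le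
      have h3 : (0:ℝ) ≤ (M:ℝ) * ((1/(q:ℝ)) * (1/(q:ℝ))) := by positivity
      have h4 : (M:ℝ) * (1/(q:ℝ)) = (M:ℝ)/q := mul_one_div _ _
      linarith
    · rw [if_neg hqq, add_zero]
      have hc : Nat.Coprime q q' := (Nat.coprime_primes (hQ q hq) (hQ q' hq')).2 hqq
      have : ∀ m, (q ∣ m ∧ q' ∣ m) ↔ q * q' ∣ m := fun m =>
        ⟨fun h => hc.mul_dvd_of_dvd_of_dvd h.1 h.2,
          fun h => ⟨(dvd_mul_right _ _).trans h, (dvd_mul_left _ _).trans h⟩⟩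
      simp only [this]
      rw [hcard]
      have h4 : ((M / (q*q') : ℕ) : ℝ) ≤ (M:ℝ) / ((q*q' : ℕ):ℝ) := Nat.cast_div_le
      refine h4.trans (le_of_eq ?_)
      push_cast
      rw [one_div_mul_one_div, mul_one_div]
  have h3 : ∑ m ∈ Finset.Ioc 0 M, (w m - E)^2 ≤ E * (M + 2 * Q.card) := by
    have : ∑ m ∈ Finset.Ioc 0 M, (w m - E)^2 = ∑ m ∈ Finset.Ioc 0 M, (w m)^2
        - 2 * E * ∑ m ∈ Finset.Ioc 0 M, w m + M * E^2 := by
      simp only [sub_sq, Finset.sum_add_distrib, Finset.sum_sub_distrib]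
      rw [Finset.mul_sum]
      simp
      refine Finset.sum_congr rfl (fun m _ => by ring)
    rw [this]
    nlinarith [mul_le_mul_of_nonneg_left h1 hE0]
  have h4 : (((Finset.Ioc 0 M).filter (fun m => ∀ q ∈ Q, ¬ q ∣ m)).card : ℝ) * E^2
      ≤ ∑ m ∈ Finset.Ioc 0 M, (w m - E)^2 := by
    rw [← nsmul_eq_mul, ← Finset.sum_const]
    refine le_trans ?_ (Finset.sum_le_sum_of_subset_of_nonneg
      (Finset.filter_subset (fun m => ∀ q ∈ Q, ¬ q ∣ m) _)
      (fun i _ _ => sq_nonneg _))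
    apply Finset.sum_le_sum
    intro m hm
    have : w m = 0 := Finset.sum_eq_zero (fun q hq => by
      rw [if_neg ((Finset.mem_filter.1 hm).2 q hq)])
    rw [this]; simp
  have h5 := h4.trans h3
  have h6 : E * ((((Finset.Ioc 0 M).filter (fun m => ∀ q ∈ Q, ¬ q ∣ m)).card : ℝ) * E)
      ≤ E * (M + 2 * Q.card) := by nlinarith
  exact le_of_mul_le_mul_left h6 hEpos


lemma pow_diff_le (k : ℕ) {a b : ℝ} (ha : 0 ≤ a) (hab : a ≤ b) :
    b^(k+1) - a^(k+1) ≤ (k+1) * b^k * (b - a) := by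
  induction k with
  | zero => simp
  | succ k ih =>
    have hb : 0 ≤ b := ha.trans hab
    have h1 : a^(k+1) ≤ b^(k+1) := pow_le_pow_left₀ ha hab _
    have h2 := mul_le_mul_of_nonneg_left ih hb
    have h3 := mul_le_mul_of_nonneg_right h1 (sub_nonneg.2 hab)
    push_cast
    calc b^(k+1+1) - a^(k+1+1) = b * (b^(k+1) - a^(k+1)) + a^(k+1) * (b - a) := by ring
      _ ≤ b * ((k+1) * b^k * (b - a)) + b^(k+1) * (b - a) := by linarith
      _ = _ := by ring

lemma le_pow_diff (k : ℕ) {a b : ℝ} (ha : 0 ≤ a) (hab : a ≤ b) :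
    (k+1) * a^k * (b - a) ≤ b^(k+1) - a^(k+1) := by
  induction k with
  | zero => simp
  | succ k ih =>
    have hb : 0 ≤ b := ha.trans hab
    have h1 : a^(k+1) ≤ b^(k+1) := pow_le_pow_left₀ ha hab _
    have h2 := mul_le_mul_of_nonneg_left ih ha
    have h3 := mul_le_mul_of_nonneg_right h1 (sub_nonneg.2 hab)
    push_cast
    calc (k+1+1) * a^(k+1) * (b-a) = a * ((k+1) * a^k * (b - a)) + a^(k+1) * (b - a) := by ring
      _ ≤ a * (b^(k+1) - a^(k+1)) + b^(k+1) * (b - a) := by linarith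
      _ = _ := by ring

noncomputable def sP (k : ℕ) (P : Finset ℕ) (N : ℕ) : ℝ :=
  ∑ n ∈ (Finset.Ioc 0 N).filter (fun n => ∀ p ∈ P, ¬ p ∣ n), (n:ℝ)^k

lemma sum_pow_bounds (k N : ℕ) :
    (N:ℝ)^(k+1) ≤ (k+1) * ∑ n ∈ Finset.Ioc 0 N, (n:ℝ)^k ∧
    (k+1) * ∑ n ∈ Finset.Ioc 0 N, (n:ℝ)^k ≤ (N:ℝ)^(k+1) + (k+1) * (N:ℝ)^k := by
  induction N with
  | zero => simp; positivity
  | succ N ih =>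
    rw [Finset.sum_Ioc_succ_top (Nat.zero_le _)]
    have h1 := pow_diff_le k (Nat.cast_nonneg N : (0:ℝ) ≤ N) (by linarith : (N:ℝ) ≤ N + 1)
    have h2 := le_pow_diff k (Nat.cast_nonneg N : (0:ℝ) ≤ N) (by linarith : (N:ℝ) ≤ N + 1)
    push_cast
    constructor <;> nlinarith [ih.1, ih.2]

lemma sP_empty_bound (k : ℕ) (y : ℝ) (hy : 0 ≤ y) :
    |sP k ∅ ⌊y⌋₊ - y^(k+1)/(k+1)| ≤ y^k := by
  have hs : sP k ∅ ⌊y⌋₊ = ∑ n ∈ Finset.Ioc 0 ⌊y⌋₊, (n:ℝ)^k := by simp [sP]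
  rw [hs]
  obtain ⟨h1, h2⟩ := sum_pow_bounds k ⌊y⌋₊
  set S := ∑ n ∈ Finset.Ioc 0 ⌊y⌋₊, (n:ℝ)^k
  have hf := Nat.floor_le hy
  have hf2 := Nat.lt_floor_add_one y
  have h3 := pow_diff_le k (Nat.cast_nonneg ⌊y⌋₊ : (0:ℝ) ≤ ⌊y⌋₊) hf
  have h4 : ((⌊y⌋₊:ℝ))^(k+1) ≤ y^(k+1) := pow_le_pow_left₀ (Nat.cast_nonneg _) hf _
  have h5 : ((⌊y⌋₊:ℝ))^k ≤ y^k := pow_le_pow_left₀ (Nat.cast_nonneg _) hf _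
  have hk : (0:ℝ) < k + 1 := by positivity
  have hyk : 0 ≤ y^k := by positivity
  have h6 : (k+1) * y^k * (y - ⌊y⌋₊) ≤ (k+1) * y^k := by
    have : 0 ≤ (k+1) * y^k := by positivity
    nlinarith
  have e : y^(k+1)/(k+1) * (k+1) = y^(k+1) := by field_simp
  rw [abs_le]
  constructor
  · have : (k+1) * (y^(k+1)/(k+1)) ≤ (k+1) * (S + y^k) := by nlinarith
    have := le_of_mul_le_mul_left this hk
    linarith
  · have : (k+1) * S ≤ (k+1) * (y^(k+1)/(k+1) + y^k) := by nlinarith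
    have := le_of_mul_le_mul_left this hk
    linarith

lemma sP_insert (k : ℕ) (P : Finset ℕ) (hP : ∀ p ∈ P, p.Prime) (p : ℕ) (hp : p.Prime)
    (hpP : p ∉ P) (N : ℕ) :
    sP k (insert p P) N = sP k P N - (p:ℝ)^k * sP k P (N / p) := by
  unfold sP
  rw [eq_sub_iff_add_eq, ← Finset.sum_filter_add_sum_filter_not
    ((Finset.Ioc 0 N).filter (fun n => ∀ p ∈ P, ¬ p ∣ n)) (fun n => ¬ p ∣ n)]
  congr 1
  · rw [Finset.filter_filter]
    refine Finset.sum_congr ?_ (fun _ _ => rfl)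
    ext n
    simp only [Finset.mem_filter, Finset.mem_insert, forall_eq_or_imp]
    tauto
  · rw [Finset.mul_sum]
    refine Finset.sum_bij (fun m _ => p * m) ?_ ?_ ?_ ?_
    · intro m hm
      simp only [Finset.mem_filter, Finset.mem_Ioc] at hm ⊢
      refine ⟨⟨⟨Nat.mul_pos hp.pos hm.1.1, ?_⟩, ?_⟩, ?_⟩
      · rw [mul_comm]; exact (Nat.le_div_iff_mul_le hp.pos).1 hm.1.2
      · intro q hq hd
        rcases ((hP q hq).dvd_mul).1 hd with h | h
        · rw [Nat.prime_dvd_prime_iff_eq (hP q hq) hp] at h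
          exact hpP (h ▸ hq)
        · exact hm.2 q hq h
      · simp
    · intro a _ b _ h
      exact Nat.eq_of_mul_eq_mul_left hp.pos h
    · intro n hn
      simp only [Finset.mem_filter, Finset.mem_Ioc, not_not] at hn
      obtain ⟨⟨⟨h0, hN⟩, h1⟩, m, rfl⟩ := hn
      refine ⟨m, ?_, rfl⟩
      simp only [Finset.mem_filter, Finset.mem_Ioc]
      refine ⟨⟨Nat.pos_of_mul_pos_left h0, ?_⟩, fun q hq h => h1 q hq (h.mul_left p)⟩
      rw [Nat.le_div_iff_mul_le hp.pos, mul_comm]; exact hN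
    · intro m _
      push_cast; rw [mul_pow]

lemma sP_bound (k : ℕ) (P : Finset ℕ) (hP : ∀ p ∈ P, p.Prime) :
    ∀ y : ℝ, 0 ≤ y →
    |sP k P ⌊y⌋₊ - y^(k+1)/(k+1) * ∏ p ∈ P, (1 - 1/(p:ℝ))| ≤ 2^P.card * y^k := by
  induction P using Finset.induction_on with
  | empty => intro y hy; simpa using sP_empty_bound k y hy
  | insert p P hpP ih =>
    intro y hy
    have hP' : ∀ q ∈ P, q.Prime := fun q hq => hP q (Finset.mem_insert_of_mem hq)
    have hp : p.Prime := hP p (Finset.mem_insert_self _ _)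
    rw [sP_insert k P hP' p hp hpP, Finset.prod_insert hpP, Finset.card_insert_of_notMem hpP]
    have h1 := ih hP' y hy
    have h2 := ih hP' (y / p) (by positivity)
    rw [Nat.floor_div_natCast] at h2
    have hp0 : (0:ℝ) < p := by exact_mod_cast hp.pos
    set A := sP k P ⌊y⌋₊
    set B := sP k P (⌊y⌋₊ / p)
    set W := ∏ p ∈ P, (1 - 1/(p:ℝ))
    have e : A - (p:ℝ)^k * B - y^(k+1)/(k+1) * ((1 - 1/(p:ℝ)) * W)
        = (A - y^(k+1)/(k+1) * W) - (p:ℝ)^k * (B - (y/p)^(k+1)/(k+1) * W) := by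
      rw [div_pow]
      field_simp
      ring
    rw [e]
    refine (abs_sub _ _).trans ?_
    rw [abs_mul, abs_of_nonneg (by positivity : (0:ℝ) ≤ (p:ℝ)^k)]
    have h3 := mul_le_mul_of_nonneg_left h2 (by positivity : (0:ℝ) ≤ (p:ℝ)^k)
    have h4 : (p:ℝ)^k * (2^P.card * (y/p)^k) = 2^P.card * y^k := by
      rw [div_pow]; field_simp
    rw [h4] at h3
    rw [pow_succ 2]; linarith


lemma cyc_no_q {n p q : ℕ} (hc : Nat.gcd n (Nat.totient n) = 1) (hp : p.Prime)
    (hpn : p ∣ n) (hq : q.Prime) (hqn : q ∣ n) (hqp : q % p = 1) : False := by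
  have h1 : p ∣ q - 1 := (Nat.modEq_iff_dvd' hq.one_lt.le).1 (by
    show 1 % p = q % p
    rw [hqp, Nat.mod_eq_of_lt hp.one_lt])
  have h2 : p ∣ Nat.totient n := by
    have := Nat.totient_dvd_of_dvd hqn
    rw [Nat.totient_prime hq] at this
    exact h1.trans this
  have := Nat.dvd_gcd hpn h2
  rw [hc] at this
  exact hp.one_lt.ne' (Nat.dvd_one.1 this)

lemma noncyc_exists {n : ℕ} (hn : 0 < n) (hc : Nat.gcd n (Nat.totient n) ≠ 1) :
    ∃ r, r.Prime ∧ r ∣ n ∧ (r * r ∣ n ∨ ∃ q, q.Prime ∧ q % r = 1 ∧ r * q ∣ n) := by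
  obtain ⟨r, hr, hd⟩ := Nat.exists_prime_and_dvd hc
  have hrn := hd.trans (Nat.gcd_dvd_left _ _)
  have hrt := hd.trans (Nat.gcd_dvd_right _ _)
  refine ⟨r, hr, hrn, ?_⟩
  rw [Nat.totient_eq_prod_factorization hn.ne', Finsupp.prod,
    (Nat.prime_iff.1 hr).dvd_finsetProd_iff] at hrt
  obtain ⟨q, hqm, hq⟩ := hrt
  rw [Nat.support_factorization] at hqm
  have hqp := Nat.prime_of_mem_primeFactors hqm
  have hqn := Nat.dvd_of_mem_primeFactors hqm
  rcases (hr.dvd_mul).1 hq with h | h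
  · left
    have h0 : n.factorization q - 1 ≠ 0 := by
      intro h0; rw [h0, pow_zero] at h
      exact hr.one_lt.ne' (Nat.dvd_one.1 h)
    have := hr.dvd_of_dvd_pow h
    rw [Nat.prime_dvd_prime_iff_eq hr hqp] at this
    subst this
    rw [← sq]
    exact (pow_dvd_pow r (by omega)).trans (Nat.ordProj_dvd n r)
  · right
    have h1 : q % r = 1 := by
      have : q = (q - 1) + 1 := by have := hqp.one_lt; omega
      rw [this, Nat.add_mod, Nat.mod_eq_zero_of_dvd h, zero_add, Nat.mod_mod,
        Nat.mod_eq_of_lt hr.one_lt]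
    refine ⟨q, hqp, h1, ?_⟩
    have hne : r ≠ q := by
      rintro rfl
      simp at h1
    exact ((Nat.coprime_primes hr hqp).2 hne).mul_dvd_of_dvd_of_dvd hrn hqn


lemma upper_fin (k N : ℕ) (P : Finset ℕ) (hP : ∀ p ∈ P, p.Prime) (a : ℝ) (ha : 0 < a)
    (hA : ∀ p ∈ P, a / p ≤ apS p (N / p)) :
    ∑ n ∈ (Finset.range (N+1)).filter IsCyclicNum, (n:ℝ)^k
      ≤ sP k P N + (N:ℝ)^k * ((3 * N / a) * P.card) := by
  classical
  let B : ℕ → Finset ℕ := fun p => (Finset.range (N+1)).filter (fun n => p ∣ n ∧ IsCyclicNum n)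
  have hB : ∀ p ∈ P, ((B p).card : ℝ) ≤ 3 * N / a := by
    intro p hp
    have hpp := hP p hp
    have hp0 : (0:ℝ) < p := by exact_mod_cast hpp.pos
    let Q := (Finset.range (N/p+1)).filter (fun q => q.Prime ∧ q % p = 1)
    have ht := turan_count Q (fun q hq => (Finset.mem_filter.1 hq).2.1) (N/p)
    have hQ : Q.card ≤ N/p := by
      have : Q ⊆ Finset.Ioc 0 (N/p) := by
        intro q hq
        simp only [Q, Finset.mem_filter, Finset.mem_range] at hq
        rw [Finset.mem_Ioc]; exact ⟨hq.2.1.pos, by omega⟩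
      simpa using Finset.card_le_card this
    have hc : (B p).card ≤ ((Finset.Ioc 0 (N/p)).filter (fun m => ∀ q ∈ Q, ¬ q ∣ m)).card := by
      refine le_trans (Finset.card_le_card ?_) (Finset.card_image_le (f := fun m => p * m))
      intro n hn
      simp only [B, Finset.mem_filter, Finset.mem_range] at hn
      obtain ⟨hnN, ⟨m, rfl⟩, hcyc⟩ := hn
      rw [Finset.mem_image]
      refine ⟨m, ?_, rfl⟩
      simp only [Finset.mem_filter, Finset.mem_Ioc]
      refine ⟨⟨Nat.pos_of_mul_pos_left hcyc.1, ?_⟩, ?_⟩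
      · rw [Nat.le_div_iff_mul_le hpp.pos, mul_comm]; omega
      · intro q hq hqm
        simp only [Q, Finset.mem_filter] at hq
        exact cyc_no_q hcyc.2 hpp (dvd_mul_right _ _) hq.2.1 (hqm.mul_left p) hq.2.2
    have hA' : a / p ≤ ∑ q ∈ Q, 1/(q:ℝ) := hA p hp
    have h1 : ((B p).card : ℝ) * (a / p) ≤ 3 * ((N:ℝ)/p) := by
      have e1 : ((B p).card : ℝ) ≤ (((Finset.Ioc 0 (N/p)).filter (fun m => ∀ q ∈ Q, ¬ q ∣ m)).card : ℝ) := by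
        exact_mod_cast hc
      have e2 : ((N/p : ℕ):ℝ) ≤ (N:ℝ)/p := Nat.cast_div_le
      have e3 : (Q.card : ℝ) ≤ ((N/p : ℕ):ℝ) := by exact_mod_cast hQ
      have e4 := mul_le_mul e1 hA' (by positivity) (by positivity)
      linarith
    rw [le_div_iff₀ ha]
    have h2 : ((B p).card : ℝ) * (a / p) * p ≤ 3 * ((N:ℝ)/p) * p :=
      mul_le_mul_of_nonneg_right h1 hp0.le
    calc ((B p).card : ℝ) * a = ((B p).card : ℝ) * (a / p) * p := by field_simp
      _ ≤ _ := h2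
      _ = _ := by field_simp
  have hsub : (Finset.range (N+1)).filter IsCyclicNum ⊆
      ((Finset.Ioc 0 N).filter (fun n => ∀ p ∈ P, ¬ p ∣ n)) ∪ P.biUnion B := by
    intro n hn
    simp only [Finset.mem_filter, Finset.mem_range] at hn
    rw [Finset.mem_union]
    by_cases h : ∀ p ∈ P, ¬ p ∣ n
    · left
      simp only [Finset.mem_filter, Finset.mem_Ioc]
      exact ⟨⟨hn.2.1, by omega⟩, h⟩
    · right
      push Not at h
      obtain ⟨p, hp, hd⟩ := h
      rw [Finset.mem_biUnion]
      exact ⟨p, hp, by simp only [B, Finset.mem_filter, Finset.mem_range]; exact ⟨hn.1, hd, hn.2⟩⟩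
  have hnn : ∀ n : ℕ, (0:ℝ) ≤ (n:ℝ)^k := fun n => by positivity
  calc ∑ n ∈ (Finset.range (N+1)).filter IsCyclicNum, (n:ℝ)^k
      ≤ ∑ n ∈ ((Finset.Ioc 0 N).filter (fun n => ∀ p ∈ P, ¬ p ∣ n)) ∪ P.biUnion B, (n:ℝ)^k :=
        Finset.sum_le_sum_of_subset_of_nonneg hsub (fun n _ _ => hnn n)
    _ ≤ sP k P N + ∑ n ∈ P.biUnion B, (n:ℝ)^k := by
        have := Finset.sum_union_inter (s₁ := (Finset.Ioc 0 N).filter (fun n => ∀ p ∈ P, ¬ p ∣ n))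
          (s₂ := P.biUnion B) (f := fun n : ℕ => (n:ℝ)^k)
        have h0 : 0 ≤ ∑ n ∈ ((Finset.Ioc 0 N).filter (fun n => ∀ p ∈ P, ¬ p ∣ n)) ∩ P.biUnion B, (n:ℝ)^k :=
          Finset.sum_nonneg (fun n _ => hnn n)
        unfold sP
        linarith
    _ ≤ sP k P N + ((P.biUnion B).card : ℝ) * (N:ℝ)^k := by
        gcongr
        rw [← nsmul_eq_mul]
        apply Finset.sum_le_card_nsmul
        intro n hn
        rw [Finset.mem_biUnion] at hn
        obtain ⟨p, _, hn⟩ := hn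
        simp only [B, Finset.mem_filter, Finset.mem_range] at hn
        have : n ≤ N := by omega
        gcongr
    _ ≤ sP k P N + (N:ℝ)^k * ((3 * N / a) * P.card) := by
        have h1 : ((P.biUnion B).card : ℝ) ≤ ∑ p ∈ P, ((B p).card : ℝ) := by
          exact_mod_cast Finset.card_biUnion_le
        have h2 : ∑ p ∈ P, ((B p).card : ℝ) ≤ P.card • (3 * N / a) :=
          Finset.sum_le_card_nsmul _ _ _ hB
        rw [nsmul_eq_mul] at h2
        have h3 := mul_le_mul_of_nonneg_right (h1.trans h2) (hnn N)
        linarith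

lemma lower_fin (k N w : ℕ) :
    sP k ((Finset.range (w+1)).filter Nat.Prime) N - (N:ℝ)^k *
      (∑ r ∈ (Finset.Ioc w N).filter Nat.Prime, ((N:ℝ) / (r:ℝ)^2 + N / r * apS r N))
      ≤ ∑ n ∈ (Finset.range (N+1)).filter IsCyclicNum, (n:ℝ)^k := by
  classical
  set P := (Finset.range (w+1)).filter Nat.Prime with hPdef
  set R := (Finset.Ioc w N).filter Nat.Prime with hRdef
  let D : ℕ → Finset ℕ := fun d => (Finset.Ioc 0 N).filter (fun n => d ∣ n)
  let Q : ℕ → Finset ℕ := fun r => (Finset.range (N+1)).filter (fun q => q.Prime ∧ q % r = 1)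
  let B : ℕ → Finset ℕ := fun r => D (r*r) ∪ (Q r).biUnion (fun q => D (r*q))
  have hD : ∀ d, ((D d).card : ℝ) ≤ (N:ℝ) / d := by
    intro d
    simp only [D]
    rw [Nat.Ioc_filter_dvd_card_eq_div]
    exact Nat.cast_div_le
  have hB : ∀ r, ((B r).card : ℝ) ≤ (N:ℝ) / (r:ℝ)^2 + N / r * apS r N := by
    intro r
    have h1 : ((B r).card : ℝ) ≤ ((D (r*r)).card : ℝ) + (((Q r).biUnion (fun q => D (r*q))).card : ℝ) := by
      exact_mod_cast Finset.card_union_le _ _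
    have h2 : (((Q r).biUnion (fun q => D (r*q))).card : ℝ) ≤ ∑ q ∈ Q r, ((D (r*q)).card : ℝ) := by
      exact_mod_cast Finset.card_biUnion_le
    have h3 : ∑ q ∈ Q r, ((D (r*q)).card : ℝ) ≤ N / r * apS r N := by
      unfold apS
      rw [Finset.mul_sum]
      apply Finset.sum_le_sum
      intro q _
      refine (hD _).trans (le_of_eq ?_)
      push_cast
      rw [mul_one_div, div_div]
    have h4 := hD (r*r)
    push_cast at h4
    rw [sq]; linarith
  have hsub : (Finset.Ioc 0 N).filter (fun n => ∀ p ∈ P, ¬ p ∣ n) ⊆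
      (Finset.range (N+1)).filter IsCyclicNum ∪ R.biUnion B := by
    intro n hn
    simp only [Finset.mem_filter, Finset.mem_Ioc] at hn
    rw [Finset.mem_union]
    by_cases h : IsCyclicNum n
    · left
      simp only [Finset.mem_filter, Finset.mem_range]
      exact ⟨by omega, h⟩
    · right
      have hg : Nat.gcd n (Nat.totient n) ≠ 1 := fun hg => h ⟨hn.1.1, hg⟩
      obtain ⟨r, hr, hrn, hor⟩ := noncyc_exists hn.1.1 hg
      have hrP : w < r := by
        by_contra hle
        exact hn.2 r (by simp only [hPdef, Finset.mem_filter, Finset.mem_range]; exact ⟨by omega, hr⟩) hrn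
      have hrN : r ≤ N := (Nat.le_of_dvd hn.1.1 hrn).trans hn.1.2
      rw [Finset.mem_biUnion]
      refine ⟨r, by simp only [hRdef, Finset.mem_filter, Finset.mem_Ioc]; exact ⟨⟨hrP, hrN⟩, hr⟩, ?_⟩
      simp only [B]
      rw [Finset.mem_union]
      rcases hor with h2 | ⟨q, hq, hq1, hqn⟩
      · left
        simp only [D, Finset.mem_filter, Finset.mem_Ioc]
        exact ⟨hn.1, h2⟩
      · right
        rw [Finset.mem_biUnion]
        have hqN : q ≤ N := (Nat.le_of_dvd hn.1.1 ((dvd_mul_left q r).trans hqn)).trans hn.1.2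
        refine ⟨q, ?_, ?_⟩
        · simp only [Q, Finset.mem_filter, Finset.mem_range]; exact ⟨by omega, hq, hq1⟩
        · simp only [D, Finset.mem_filter, Finset.mem_Ioc]
          exact ⟨hn.1, hqn⟩
  have hnn : ∀ n : ℕ, (0:ℝ) ≤ (n:ℝ)^k := fun n => by positivity
  rw [sub_le_iff_le_add]
  calc sP k P N ≤ ∑ n ∈ (Finset.range (N+1)).filter IsCyclicNum ∪ R.biUnion B, (n:ℝ)^k :=
        Finset.sum_le_sum_of_subset_of_nonneg hsub (fun n _ _ => hnn n)
    _ ≤ ∑ n ∈ (Finset.range (N+1)).filter IsCyclicNum, (n:ℝ)^k + ∑ n ∈ R.biUnion B, (n:ℝ)^k := by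
        have := Finset.sum_union_inter (s₁ := (Finset.range (N+1)).filter IsCyclicNum)
          (s₂ := R.biUnion B) (f := fun n : ℕ => (n:ℝ)^k)
        have h0 : 0 ≤ ∑ n ∈ (Finset.range (N+1)).filter IsCyclicNum ∩ R.biUnion B, (n:ℝ)^k :=
          Finset.sum_nonneg (fun n _ => hnn n)
        linarith
    _ ≤ ∑ n ∈ (Finset.range (N+1)).filter IsCyclicNum, (n:ℝ)^k + ((R.biUnion B).card : ℝ) * (N:ℝ)^k := by
        gcongr
        rw [← nsmul_eq_mul]
        apply Finset.sum_le_card_nsmul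
        intro n hn
        rw [Finset.mem_biUnion] at hn
        obtain ⟨p, _, hn⟩ := hn
        have : n ≤ N := by
          simp only [B, D, Finset.mem_union, Finset.mem_biUnion, Finset.mem_filter, Finset.mem_Ioc] at hn
          rcases hn with h | ⟨q, _, h⟩
          · exact h.1.2
          · exact h.1.2
        gcongr
    _ ≤ _ := by
        have h1 : ((R.biUnion B).card : ℝ) ≤ ∑ p ∈ R, ((B p).card : ℝ) := by
          exact_mod_cast Finset.card_biUnion_le
        have h2 := Finset.sum_le_sum (fun r (_ : r ∈ R) => hB r)
        have h3 := mul_le_mul_of_nonneg_right (h1.trans h2) (hnn N)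
        linarith

lemma sum_log_sq (w N : ℕ) (hw : 1 ≤ w) (hwN : w ≤ N) :
    ∑ r ∈ Finset.Ioc w N, Real.log r / (r:ℝ)^2 ≤ (Real.log w + 2) / w - (Real.log N + 2) / N := by
  induction N, hwN using Nat.le_induction with
  | base => simp
  | succ n hn ih =>
    rw [Finset.sum_Ioc_succ_top hn]
    have hn1 : (1:ℝ) ≤ n := by exact_mod_cast hw.trans hn
    have hn0 : (0:ℝ) < n := by linarith
    have key : Real.log ((n+1:ℕ):ℝ) / ((n+1:ℕ):ℝ)^2 ≤
        (Real.log n + 2) / n - (Real.log ((n+1:ℕ):ℝ) + 2) / ((n+1:ℕ):ℝ) := by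
      push_cast
      have h1 : Real.log ((n:ℝ)+1) - Real.log n ≤ 1 / n := by
        rw [← Real.log_div (by positivity) hn0.ne']
        refine (Real.log_le_sub_one_of_pos (by positivity)).trans (le_of_eq ?_)
        field_simp; ring
      have hl : 0 ≤ Real.log ((n:ℝ)+1) := Real.log_nonneg (by linarith)
      have h2 : Real.log ((n:ℝ)+1) / ((n:ℝ)+1)^2 ≤ Real.log ((n:ℝ)+1) / (n * ((n:ℝ)+1)) := by
        apply div_le_div_of_nonneg_left hl (by positivity)
        nlinarith
      refine h2.trans ?_
      have h3 : (n+1) * (Real.log ((n:ℝ)+1) - Real.log n) ≤ 2 := by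
        calc (n+1) * (Real.log ((n:ℝ)+1) - Real.log n) ≤ (n+1) * (1/n) := by gcongr
          _ = 1 + 1/n := by field_simp
          _ ≤ 2 := by
            have : 1 / (n:ℝ) ≤ 1 := by rw [div_le_one hn0]; exact hn1
            linarith
      have e : (Real.log n + 2) / n - (Real.log ((n:ℝ)+1) + 2) / ((n:ℝ)+1)
          = (Real.log ((n:ℝ)+1) + (2 - (n+1) * (Real.log ((n:ℝ)+1) - Real.log n))) / (n * ((n:ℝ)+1)) := by
        field_simp; ring
      rw [e]
      gcongr
      linarith
    linarith

lemma lower_fin2 (k N w : ℕ) (hw : 1 ≤ w) (hwN : w ≤ N) (hN : Real.exp 1 ≤ N) :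
    sP k ((Finset.range (w+1)).filter Nat.Prime) N - (N:ℝ)^k *
      (N * (102 * (Real.log (Real.log N) + 1) * ((Real.log w + 2) / w)))
      ≤ ∑ n ∈ (Finset.range (N+1)).filter IsCyclicNum, (n:ℝ)^k := by
  refine le_trans ?_ (lower_fin k N w)
  have hN0 : (0:ℝ) < N := (Real.exp_pos 1).trans_le hN
  have hlog : 1 ≤ Real.log N := by
    rw [Real.le_log_iff_exp_le hN0]; exact hN
  have hLL : 0 ≤ Real.log (Real.log N) := Real.log_nonneg hlog
  gcongr
  calc ∑ r ∈ (Finset.Ioc w N).filter Nat.Prime, ((N:ℝ) / (r:ℝ)^2 + N / r * apS r N)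
      ≤ ∑ r ∈ (Finset.Ioc w N).filter Nat.Prime,
          (N * (102 * (Real.log (Real.log N) + 1)) * (Real.log r / (r:ℝ)^2)) := by
        apply Finset.sum_le_sum
        intro r hr
        have hp := (Finset.mem_filter.1 hr).2
        have hr2 : (2:ℝ) ≤ r := by exact_mod_cast hp.two_le
        have hr0 : (0:ℝ) < r := by linarith
        have hl : 1 ≤ 2 * Real.log r := by
          have := Real.log_le_log (by norm_num) hr2
          have := Real.log_two_gt_d9
          linarith
        have h1 := apS_upper hp hN
        have h2 : (N:ℝ) / r * apS r N ≤ N / r * (100 * (Real.log r / r) * (Real.log (Real.log N) + 1)) := by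
          gcongr
        have h3 : (N:ℝ) / (r:ℝ)^2 ≤ N / (r:ℝ)^2 * (2 * Real.log r) :=
          le_mul_of_one_le_right (by positivity) hl
        have h4 : 0 ≤ (N:ℝ) / (r:ℝ)^2 * (2 * Real.log r) * Real.log (Real.log N) := by
          apply mul_nonneg (mul_nonneg (by positivity) (by linarith)) hLL
        have e : N * (102 * (Real.log (Real.log N) + 1)) * (Real.log r / (r:ℝ)^2)
            = N / r * (100 * (Real.log r / r) * (Real.log (Real.log N) + 1))
              + (N / (r:ℝ)^2 * (2 * Real.log r) + (N:ℝ) / (r:ℝ)^2 * (2 * Real.log r) * Real.log (Real.log N)) := by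
          field_simp; ring
        rw [e]; linarith
    _ = N * (102 * (Real.log (Real.log N) + 1)) *
          ∑ r ∈ (Finset.Ioc w N).filter Nat.Prime, (Real.log r / (r:ℝ)^2) := by
        rw [Finset.mul_sum]
    _ ≤ N * (102 * (Real.log (Real.log N) + 1)) * ((Real.log w + 2) / w) := by
        gcongr
        have h1 := sum_log_sq w N hw hwN
        have h2 : 0 ≤ (Real.log N + 2) / N := by positivity
        refine le_trans (Finset.sum_le_sum_of_subset_of_nonneg (Finset.filter_subset _ _) ?_) (by linarith)
        intro r hr _
        have : (1:ℝ) ≤ r := by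
          have := (Finset.mem_Ioc.1 hr).1
          exact_mod_cast (by omega : 1 ≤ r)
        have := Real.log_nonneg this
        positivity
    _ = _ := by ring


lemma tend_L : Tendsto (fun x : ℝ => Real.log (Real.log x)) atTop atTop :=
  Real.tendsto_log_atTop.comp Real.tendsto_log_atTop

lemma tend_u : Tendsto (fun x : ℝ => Real.log (Real.log (Real.log x))) atTop atTop :=
  Real.tendsto_log_atTop.comp tend_L

lemma apS_ev : ∀ᶠ x : ℝ in atTop, ∀ p : ℕ, p.Prime →
    (p:ℝ) ≤ Real.log (Real.log x) / (Real.log (Real.log (Real.log x)))^2 →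
    (Real.log (Real.log x) / 8) / p ≤ apS p (⌊x⌋₊ / p) := by
  obtain ⟨C, hC, M0, h⟩ := apS_lower
  have e1 : ∀ᶠ x : ℝ in atTop, Real.log x ≤ (1/2) * x^(1/2:ℝ) := by
    have := (isLittleO_log_rpow_atTop (show (0:ℝ) < 1/2 by norm_num)).bound
      (show (0:ℝ) < 1/2 by norm_num)
    filter_upwards [this, eventually_ge_atTop 1] with x hx h1
    rw [Real.norm_of_nonneg (Real.log_nonneg h1), Real.norm_of_nonneg (by positivity)] at hx
    exact hx
  have e2 := tend_L.eventually_ge_atTop 2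
  have e3 := tend_u.eventually_ge_atTop (8 * C + 2)
  have e4 := Real.tendsto_log_atTop.eventually_ge_atTop 2
  have e5 := (tendsto_rpow_atTop (show (0:ℝ) < 1/2 by norm_num)).eventually_ge_atTop ((M0:ℝ) + 1)
  filter_upwards [e1, e2, e3, e4, e5, eventually_ge_atTop 1] with x h1 h2 h3 h4 h5 hx1 p hp hpz
  set L := Real.log (Real.log x) with hL
  set u := Real.log L with hu
  set s := x^(1/2:ℝ) with hs
  have hu2 : 2 ≤ u := by linarith
  have hx0 : 0 < x := by linarith
  have hp0 : (0:ℝ) < p := by exact_mod_cast hp.pos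
  have hp1 : (1:ℝ) ≤ p := by exact_mod_cast hp.one_lt.le
  have hss : s * s = x := by rw [hs, ← Real.rpow_add hx0]; norm_num
  have hs1 : 1 ≤ s := by have : (0:ℝ) ≤ M0 := Nat.cast_nonneg _; linarith
  have hLlog : L ≤ Real.log x := by
    rw [hL]; exact (Real.log_le_sub_one_of_pos (by linarith)).trans (by linarith)
  have hLu : L / u^2 ≤ L / 2 := by
    apply div_le_div_of_nonneg_left (by linarith) (by norm_num); nlinarith
  have hpL : (p:ℝ) ≤ L := by linarith
  set M := ⌊x⌋₊ / p with hM
  have hMs : s ≤ M := by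
    have hfl := Nat.lt_floor_add_one (x / (p:ℝ))
    rw [Nat.floor_div_natCast] at hfl
    have : s + 1 ≤ x / p := by
      rw [le_div_iff₀ hp0]
      have : (p:ℝ) ≤ 1/2 * s := by linarith
      nlinarith
    have hfl' : x / (p:ℝ) < (M:ℝ) + 1 := hfl
    linarith
  have hM0 : M0 ≤ M := by
    have : (M0:ℝ) ≤ M := by linarith
    exact_mod_cast this
  have hlogs : Real.log s = Real.log x / 2 := by
    rw [hs, Real.log_rpow hx0]; ring
  have hLM : L / 2 ≤ Real.log (Real.log M) := by
    have a1 : Real.log x / 2 ≤ Real.log M := by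
      rw [← hlogs]; exact Real.log_le_log (by linarith) hMs
    have a2 := Real.log_le_log (by linarith) a1
    rw [Real.log_div (by linarith) (by norm_num)] at a2
    have := Real.log_two_lt_d9
    have a3 : L - Real.log 2 ≤ Real.log (Real.log M) := a2
    linarith
  have key := h M hM0 p hp (by linarith)
  refine le_trans ?_ key
  have hlp : Real.log p ≤ u := Real.log_le_log hp0 hpL
  have hlp0 : 0 ≤ Real.log p := Real.log_nonneg hp1
  have b1 : C * Real.log p * p ≤ L / 8 := by
    have c1 : (p:ℝ) * u ^ 2 ≤ L := by
      rwa [le_div_iff₀ (by positivity)] at hpz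
    have c2 : C * Real.log p * p ≤ C * u * p := by gcongr
    have c3 : 8 * C * (u * p) ≤ u * (u * p) := by
      apply mul_le_mul_of_nonneg_right (by linarith) (by positivity)
    nlinarith
  have b2 : (L / 2) / (2 * p) ≤ Real.log (Real.log M) / (2 * p) := by gcongr
  refine le_trans ?_ (sub_le_sub_right b2 _)
  have : (L/2)/(2*p) - C * Real.log p = (L/4 - C * Real.log p * p) / p := by
    field_simp; ring
  rw [this]
  gcongr
  linarith

noncomputable def er (u : ℝ) : ℝ := u * Real.exp (Real.exp u * u^3 + 1) / Real.exp (Real.exp (Real.exp u))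

lemma tend_er : Tendsto er atTop (nhds 0) := by
  have h3 : ∀ᶠ t : ℝ in atTop, t^3 ≤ Real.exp t := by
    have := (isLittleO_pow_exp_atTop (n := 3)).bound (show (0:ℝ) < 1 by norm_num)
    filter_upwards [this, eventually_ge_atTop 0] with t ht h0
    rw [Real.norm_of_nonneg (by positivity), Real.norm_of_nonneg (by positivity), one_mul] at ht
    exact ht
  have hg : Tendsto (fun u : ℝ => Real.exp (-Real.exp u)) atTop (nhds 0) :=
    Real.tendsto_exp_neg_atTop_nhds_zero.comp Real.tendsto_exp_atTop
  refine tendsto_of_tendsto_of_tendsto_of_le_of_le' tendsto_const_nhds hg ?_ ?_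
  · filter_upwards [eventually_ge_atTop 0] with u hu
    unfold er; positivity
  · filter_upwards [h3, Real.tendsto_exp_atTop.eventually h3, eventually_ge_atTop 0,
      Real.tendsto_exp_atTop.eventually_ge_atTop 3] with u h1 h2 h0 h4
    unfold er
    set t := Real.exp u
    have hut : u ≤ Real.exp t := by
      have := Real.add_one_le_exp u
      have := Real.add_one_le_exp t
      linarith
    calc u * Real.exp (t * u^3 + 1) / Real.exp (Real.exp t)
        ≤ Real.exp t * Real.exp (t * t + 1) / Real.exp (Real.exp t) := by gcongr
      _ = Real.exp (t + (t * t + 1) - Real.exp t) := by rw [Real.exp_sub, Real.exp_add t]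
      _ ≤ Real.exp (-t) := by
        apply Real.exp_le_exp.2
        nlinarith [mul_nonneg (sub_nonneg.2 h4) (sq_nonneg t)]

lemma tend_logu : Tendsto (fun u : ℝ => Real.log u / u) atTop (nhds 0) := by
  have := Real.isLittleO_log_id_atTop.tendsto_div_nhds_zero
  simpa using this

lemma mV_ratio (z : ℝ → ℝ) (hz : Tendsto z atTop atTop) (c : ℝ)
    (hl : ∀ᶠ u in atTop, Real.log (z u) = u + c * Real.log u) :
    Tendsto (fun u => u * mV (z u)) atTop (nhds (Real.exp (-Real.eulerMascheroniConstant))) := by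
  have h1 := mertens_three.comp hz
  have h2 : Tendsto (fun u : ℝ => 1 + c * (Real.log u / u)) atTop (nhds (1 + c * 0)) :=
    (tend_logu.const_mul c).const_add 1
  have h3 := h1.div h2 (by norm_num)
  simp only [mul_zero, add_zero, div_one] at h3
  refine h3.congr' ?_
  filter_upwards [hl, eventually_gt_atTop 0, (Real.tendsto_log_atTop.comp hz).eventually_gt_atTop 0]
    with u hu h0 hp
  simp only [Pi.div_apply, Function.comp_apply] at hp ⊢
  have e : 1 + c * (Real.log u / u) = Real.log (z u) / u := by
    rw [hu]; field_simp
  rw [e]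
  field_simp

lemma mV_z1 : Tendsto (fun u : ℝ => u * mV (Real.exp u / u^2)) atTop
    (nhds (Real.exp (-Real.eulerMascheroniConstant))) := by
  refine mV_ratio _ (Real.tendsto_exp_div_pow_atTop 2) (-2) ?_
  filter_upwards [eventually_gt_atTop 0] with u hu
  rw [Real.log_div (by positivity) (by positivity), Real.log_exp, Real.log_pow]
  push_cast; ring

lemma log_z2 {u : ℝ} (hu : 0 < u) : Real.log (Real.exp u * u^3) = u + 3 * Real.log u := by
  rw [Real.log_mul (by positivity) (by positivity), Real.log_exp, Real.log_pow]
  push_cast; ring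

lemma mV_z2 : Tendsto (fun u : ℝ => u * mV (Real.exp u * u^3)) atTop
    (nhds (Real.exp (-Real.eulerMascheroniConstant))) := by
  refine mV_ratio _ (Real.tendsto_exp_atTop.atTop_mul_atTop₀ (tendsto_pow_atTop (by norm_num))) 3 ?_
  filter_upwards [eventually_gt_atTop 0] with u hu
  exact log_z2 hu


lemma two_pow_card (z : ℝ) (hz : 0 ≤ z) :
    (((Finset.range (⌊z⌋₊+1)).filter Nat.Prime).card : ℝ) ≤ z + 1 ∧
    (2:ℝ) ^ ((Finset.range (⌊z⌋₊+1)).filter Nat.Prime).card ≤ Real.exp (z + 1) := by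
  set n := ((Finset.range (⌊z⌋₊+1)).filter Nat.Prime).card
  have h1 : (n:ℝ) ≤ z + 1 := by
    have : n ≤ ⌊z⌋₊ + 1 := by simpa using Finset.card_filter_le (Finset.range (⌊z⌋₊+1)) Nat.Prime
    have h2 : (n:ℝ) ≤ (⌊z⌋₊:ℝ) + 1 := by exact_mod_cast this
    have := Nat.floor_le hz
    linarith
  refine ⟨h1, ?_⟩
  have h2 : (2:ℝ) ≤ Real.exp 1 := by have := Real.add_one_le_exp (1:ℝ); linarith
  calc (2:ℝ)^n ≤ (Real.exp 1)^n := by gcongr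
    _ = Real.exp n := by rw [← Real.exp_nat_mul, mul_one]
    _ ≤ _ := Real.exp_le_exp.2 h1

noncomputable def G (k : ℕ) (x : ℝ) : ℝ :=
  cyclicPowSum k x / x^(k+1) * Real.log (Real.log (Real.log x))

noncomputable def Up (k : ℕ) (u : ℝ) : ℝ :=
  u * mV (Real.exp u / u^2) / (k+1) + er u + 24 * (1 / u + u / Real.exp u)

noncomputable def Lo (k : ℕ) (u : ℝ) : ℝ :=
  u * mV (Real.exp u * u^3) / (k+1) - er u - 204 * 12 / u

lemma exps {x : ℝ} (hx2 : 2 ≤ Real.log (Real.log x))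
    (hx3 : 2 ≤ Real.log x) (h1 : 1 ≤ x) :
    Real.exp (Real.log (Real.log (Real.log x))) = Real.log (Real.log x) ∧
    Real.exp (Real.exp (Real.exp (Real.log (Real.log (Real.log x))))) = x := by
  have a : Real.exp (Real.log (Real.log (Real.log x))) = Real.log (Real.log x) :=
    Real.exp_log (by linarith)
  refine ⟨a, ?_⟩
  rw [a, Real.exp_log (by linarith), Real.exp_log (by linarith)]

lemma upper_ev (k : ℕ) : ∀ᶠ x : ℝ in atTop, G k x ≤ Up k (Real.log (Real.log (Real.log x))) := by
  filter_upwards [apS_ev, tend_u.eventually_ge_atTop 2, tend_L.eventually_ge_atTop 2,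
    Real.tendsto_log_atTop.eventually_ge_atTop 2, eventually_ge_atTop 1] with x hap hu hL hl hx
  obtain ⟨E1, E2⟩ := exps hL hl hx
  unfold G Up er
  set u := Real.log (Real.log (Real.log x)) with hudef
  rw [E2, E1]
  set L := Real.log (Real.log x) with hLdef
  set z := L / u^2 with hz
  have hx0 : 0 < x := by linarith
  have hz0 : 0 ≤ z := by positivity
  set P := (Finset.range (⌊z⌋₊+1)).filter Nat.Prime with hP
  have hPp : ∀ p ∈ P, p.Prime := fun p hp => (Finset.mem_filter.1 hp).2
  have h1 := upper_fin k ⌊x⌋₊ P hPp (L/8) (by linarith) (by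
    intro p hp
    refine hap p (hPp p hp) ?_
    have : p ≤ ⌊z⌋₊ := by
      have := Finset.mem_range.1 (Finset.mem_filter.1 hp).1
      omega
    exact (Nat.le_floor_iff hz0).1 this)
  have h2 := (abs_le.1 (sP_bound k P hPp x hx0.le)).2
  obtain ⟨c1, c2⟩ := two_pow_card z hz0
  have hmV : ∏ p ∈ P, (1 - 1/(p:ℝ)) = mV z := rfl
  rw [hmV] at h2
  have hN : (⌊x⌋₊:ℝ) ≤ x := Nat.floor_le hx0.le
  have h3 : (⌊x⌋₊:ℝ)^k * ((3 * ⌊x⌋₊ / (L/8)) * P.card) ≤ x^k * ((3 * x / (L/8)) * (z + 1)) := by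
    gcongr
  have hzz : z ≤ L * u^3 := by
    rw [hz]
    calc L / u^2 ≤ L := div_le_self (by linarith) (by nlinarith)
      _ ≤ L * u^3 := le_mul_of_one_le_right (by linarith) (one_le_pow₀ (by linarith))
  have h4 : (2:ℝ)^P.card * x^k ≤ Real.exp (L * u^3 + 1) * x^k := by
    apply mul_le_mul_of_nonneg_right _ (by positivity)
    exact c2.trans (Real.exp_le_exp.2 (by linarith))
  have h5 : cyclicPowSum k x ≤ x^(k+1)/(k+1) * mV z + Real.exp (L * u^3 + 1) * x^k
      + x^k * ((3 * x / (L/8)) * (z + 1)) := by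
    have : cyclicPowSum k x ≤ sP k P ⌊x⌋₊ + (⌊x⌋₊:ℝ)^k * ((3 * ⌊x⌋₊ / (L/8)) * P.card) := h1
    linarith
  calc cyclicPowSum k x / x^(k+1) * u ≤ (x^(k+1)/(k+1) * mV z + Real.exp (L * u^3 + 1) * x^k
      + x^k * ((3 * x / (L/8)) * (z + 1))) / x^(k+1) * u := by gcongr
    _ = u * mV z / (k+1) + u * Real.exp (L * u^3 + 1) / x + 24 * (1/u + u/L) := by
      rw [hz]
      have hL0 : L ≠ 0 := by linarith
      have hu0 : u ≠ 0 := by linarith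
      field_simp
      ring

lemma lower_ev (k : ℕ) : ∀ᶠ x : ℝ in atTop, Lo k (Real.log (Real.log (Real.log x))) ≤ G k x := by
  have e1 : ∀ᶠ u : ℝ in atTop, Real.exp u * u^3 + 1 ≤ Real.exp (Real.exp (Real.exp u)) := by
    have := tend_er.eventually_le_const (show (0:ℝ) < 1 by norm_num)
    filter_upwards [this, eventually_ge_atTop 1] with u hu h1
    unfold er at hu
    rw [div_le_one (by positivity)] at hu
    have h2 := Real.add_one_le_exp (Real.exp u * u^3 + 1)
    have h3 : Real.exp (Real.exp u * u^3 + 1) ≤ u * Real.exp (Real.exp u * u^3 + 1) :=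
      le_mul_of_one_le_left (by positivity) h1
    linarith
  filter_upwards [tend_u.eventually e1, tend_u.eventually_ge_atTop 2, tend_L.eventually_ge_atTop 2,
    Real.tendsto_log_atTop.eventually_ge_atTop 2, eventually_ge_atTop 10] with x hzx hu hL hl hx
  obtain ⟨E1, E2⟩ := exps hL hl (by linarith)
  unfold G Lo er
  set u := Real.log (Real.log (Real.log x)) with hudef
  rw [E2, E1] at hzx
  rw [E2, E1]
  set L := Real.log (Real.log x) with hLdef
  set z := L * u^3 with hz
  have hx0 : 0 < x := by linarith
  have hu3 : 1 ≤ u^3 := one_le_pow₀ (by linarith)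
  have hz2 : 2 ≤ z := by rw [hz]; nlinarith
  have hz0 : 0 ≤ z := by positivity
  set P := (Finset.range (⌊z⌋₊+1)).filter Nat.Prime with hP
  have hPp : ∀ p ∈ P, p.Prime := fun p hp => (Finset.mem_filter.1 hp).2
  have hN : (⌊x⌋₊:ℝ) ≤ x := Nat.floor_le hx0.le
  have hN' := Nat.lt_floor_add_one x
  have hw : (⌊z⌋₊:ℝ) ≤ z := Nat.floor_le hz0
  have hw' := Nat.lt_floor_add_one z
  have hw1 : 1 ≤ ⌊z⌋₊ := Nat.le_floor (by push_cast; linarith)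
  have hN3 : (9:ℝ) ≤ ⌊x⌋₊ := by linarith
  have he : Real.exp 1 ≤ ⌊x⌋₊ := by have := Real.exp_one_lt_d9; linarith
  have h1 := lower_fin2 k ⌊x⌋₊ ⌊z⌋₊ hw1 (Nat.floor_mono (by linarith)) he
  have h2 := (abs_le.1 (sP_bound k P hPp x hx0.le)).1
  obtain ⟨c1, c2⟩ := two_pow_card z hz0
  have hmV : ∏ p ∈ P, (1 - 1/(p:ℝ)) = mV z := rfl
  rw [hmV] at h2
  have hlN : 1 ≤ Real.log (⌊x⌋₊:ℝ) := by
    rw [Real.le_log_iff_exp_le (by linarith)]; exact he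
  have hlw : 0 ≤ Real.log (⌊z⌋₊:ℝ) := Real.log_nonneg (by exact_mod_cast hw1)
  have hLLN : Real.log (Real.log (⌊x⌋₊:ℝ)) ≤ L :=
    Real.log_le_log (by linarith) (Real.log_le_log (by linarith) hN)
  have hLLN0 : 0 ≤ Real.log (Real.log (⌊x⌋₊:ℝ)) := Real.log_nonneg hlN
  have hlz : Real.log (⌊z⌋₊:ℝ) + 2 ≤ 6 * u := by
    have a1 : Real.log (⌊z⌋₊:ℝ) ≤ Real.log z :=
      Real.log_le_log (by exact_mod_cast hw1) hw
    have a2 : Real.log z = u + 3 * Real.log u := by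
      rw [hz, ← E1]; exact log_z2 (by linarith)
    have a3 := Real.log_le_sub_one_of_pos (show 0 < u by linarith)
    linarith
  have hwz : z / 2 ≤ (⌊z⌋₊:ℝ) := by
    linarith
  have h3 : (⌊x⌋₊:ℝ)^k * (⌊x⌋₊ * (102 * (Real.log (Real.log (⌊x⌋₊:ℝ)) + 1) *
      ((Real.log (⌊z⌋₊:ℝ) + 2) / (⌊z⌋₊:ℝ)))) ≤
      x^k * (x * (102 * (2 * L) * ((6 * u) / (z/2)))) := by
    have : Real.log (Real.log (⌊x⌋₊:ℝ)) + 1 ≤ 2 * L := by linarith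
    gcongr
  have h4 : (2:ℝ)^P.card * x^k ≤ Real.exp (z + 1) * x^k := by
    apply mul_le_mul_of_nonneg_right c2 (by positivity)
  have h5 : x^(k+1)/(k+1) * mV z - Real.exp (z + 1) * x^k
      - x^k * (x * (102 * (2 * L) * ((6 * u) / (z/2)))) ≤ cyclicPowSum k x := by
    have : _ ≤ cyclicPowSum k x := h1
    linarith
  calc u * mV z / (k+1) - u * Real.exp (z + 1) / x - 204 * 12 / u
      = (x^(k+1)/(k+1) * mV z - Real.exp (z + 1) * x^k
      - x^k * (x * (102 * (2 * L) * ((6 * u) / (z/2))))) / x^(k+1) * u := by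
        have hL0 : L ≠ 0 := by linarith
        have hu0 : u ≠ 0 := by linarith
        rw [show (6 * u) / (z/2) = 12 / (L * u^2) by rw [hz]; field_simp; norm_num]
        field_simp
        ring
    _ ≤ _ := by gcongr

lemma tend_G (k : ℕ) : Tendsto (G k) atTop
    (nhds (Real.exp (-Real.eulerMascheroniConstant) / (k+1))) := by
  have hinv : ∀ c : ℝ, Tendsto (fun u : ℝ => c / u) atTop (nhds 0) := fun c =>
    tendsto_const_nhds.div_atTop tendsto_id
  have hue : Tendsto (fun u : ℝ => u / Real.exp u) atTop (nhds 0) := by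
    have := Real.tendsto_pow_mul_exp_neg_atTop_nhds_zero 1
    refine this.congr (fun u => ?_)
    rw [pow_one, Real.exp_neg]; rfl
  have hU : Tendsto (Up k) atTop (nhds (Real.exp (-Real.eulerMascheroniConstant) / (k+1))) := by
    have := ((mV_z1.div_const ((k:ℝ)+1)).add tend_er).add (((hinv 1).add hue).const_mul 24)
    simp only [add_zero, mul_zero] at this
    exact this
  have hLo : Tendsto (Lo k) atTop (nhds (Real.exp (-Real.eulerMascheroniConstant) / (k+1))) := by
    have := ((mV_z2.div_const ((k:ℝ)+1)).sub tend_er).sub (hinv (204 * 12))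
    simp only [sub_zero] at this
    exact this
  exact tendsto_of_tendsto_of_tendsto_of_le_of_le' (hLo.comp tend_u) (hU.comp tend_u)
    (lower_ev k) (upper_ev k)


end CycN

theorem cyclicPowSum_isEquivalent_explicit (k : ℕ) (hk : 0 < k) :
    (fun x : ℝ => cyclicPowSum k x) ~[atTop]
      (fun x : ℝ => x ^ (k + 1) /
        ((k + 1) * Real.exp Real.eulerMascheroniConstant *
          Real.log (Real.log (Real.log x)))) := by
  apply isEquivalent_of_tendsto_one
  have h := (CycN.tend_G k).mul_const (((k:ℝ) + 1) * Real.exp Real.eulerMascheroniConstant)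
  have e : Real.exp (-Real.eulerMascheroniConstant) / ((k:ℝ)+1) *
      (((k:ℝ) + 1) * Real.exp Real.eulerMascheroniConstant) = 1 := by
    rw [Real.exp_neg]; field_simp
  rw [e] at h
  refine h.congr' ?_
  filter_upwards [CycN.tend_u.eventually_gt_atTop 0, eventually_gt_atTop 0] with x hu hx
  simp only [Pi.div_apply, CycN.G]
  field_simp
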